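/- arXiv:2008.04754 — 3 statements merged into one kernel-verified Lean document; each statement's English description precedes it below -/
import Mathlib

section
/- Let f(x) = \sum_{k=0}^\infty a_k x^k, with a_k > 0 for all k \ge 0, be an entire function such that 2\cdot 2^{1/3} \le q_2(f) \le q_3(f) \le q_4(f) \le \cdots (the sequence of second quotients of Taylor coefficients is non-decreasing and its first term is at least 2\cdot 2^{1/3}). Then all but a finite number of zeros of f are real and simple; that is, there exists a finite set S \subset \mathbb{C} such that every zero z of f with z \notin S satisfies z \in \mathbb{R} and f'(z) \ne 0. -/
/-- The second quotients of Taylor coefficients: `q n = a_{n-1}^2 / (a_{n-2} a_n)`. -/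
noncomputable def secondQuotient (a : ℕ → ℝ) (n : ℕ) : ℝ := (a (n - 1)) ^ 2 / (a (n - 2) * a n)

open Filter Finset Topology

/-!
Let `1 / q_n → s < 1` and `t = √s`. On the circle of radius `r_n`, the geometric mean of
`a_n / a_{n+1}` and `a_{n+1} / a_{n+2}`, the term of index `n + 1` dominates, and the terms divided
by it converge to `t ^ (j ^ 2)` at offset `j`. Hence the normalized value of `f` at `-r_n` tends, up
to the sign `(-1) ^ (n + 1)`, to the theta value `∑ (-1) ^ j * t ^ (j ^ 2)`, which is positive by
Jacobi's functional equation. So `f` alternates in sign along `-r_n` and has a real zero in each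
interval `(-r_{n+1}, -r_n)` for large `n`. On the other hand `|f|` is at most a constant multiple of
the dominant term on `|z| = r_n`, and comparing this with the zeros already found in Jensen's
formula leaves room for only boundedly many zeros that are nonreal or multiple.
-/

section Sequences

lemma tendsto_div_add_of_tendsto_div_succ {𝕜 : Type*} [GroupWithZero 𝕜] [TopologicalSpace 𝕜]
    [ContinuousMul 𝕜] {R : ℕ → 𝕜} {s : 𝕜} (hR : ∀ n, R n ≠ 0)
    (h : Tendsto (fun n => R n / R (n + 1)) atTop (𝓝 s)) (k : ℕ) :
    Tendsto (fun n => R n / R (n + k)) atTop (𝓝 (s ^ k)) := by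
  induction k with
  | zero => simpa [hR] using tendsto_const_nhds
  | succ k ih =>
    rw [pow_succ]
    refine (ih.mul ((tendsto_add_atTop_iff_nat k).2 h)).congr fun n => ?_
    rw [add_right_comm, div_mul_div_cancel₀ (hR _), add_right_comm, add_assoc]

lemma tendsto_atTop_of_tendsto_div_succ_lt_one {R : ℕ → ℝ} {s : ℝ} (hR : ∀ n, 0 < R n)
    (hs : s < 1) (h : Tendsto (fun n => R n / R (n + 1)) atTop (𝓝 s)) :
    Tendsto R atTop atTop := by
  have hsum : Summable fun n => (R n)⁻¹ := by
    refine summable_of_ratio_test_tendsto_lt_one hs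
      (Eventually.of_forall fun n => inv_ne_zero (hR n).ne') (h.congr fun n => ?_)
    rw [norm_inv, norm_inv, Real.norm_of_nonneg (hR _).le, Real.norm_of_nonneg (hR _).le,
      inv_div_inv]
  have hinv : Tendsto (fun n => (R n)⁻¹) atTop (𝓝[>] 0) :=
    tendsto_nhdsWithin_iff.2
      ⟨hsum.tendsto_atTop_zero, Eventually.of_forall fun n => inv_pos.2 (hR n)⟩
  exact hinv.inv_tendsto_nhdsGT_zero.congr fun n => inv_inv (R n)

lemma eventually_forall_ge_le_of_le_succ {α : Type*} [Preorder α] {R : ℕ → α}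
    (hmono : ∀ᶠ n in atTop, R n ≤ R (n + 1)) : ∀ᶠ n in atTop, ∀ i, n ≤ i → R n ≤ R i := by
  obtain ⟨m, hm⟩ := eventually_atTop.1 hmono
  filter_upwards [eventually_ge_atTop m] with n hn i hi
  exact monotoneOn_nat_Ici_of_le_succ hm hn (hn.trans hi) hi

lemma eventually_forall_le_le_of_le_succ {α : Type*} [Preorder α] {R : ℕ → α}
    (hR : Tendsto R atTop atTop) (hmono : ∀ᶠ n in atTop, R n ≤ R (n + 1)) :
    ∀ᶠ n in atTop, ∀ i ≤ n, R i ≤ R n := by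
  obtain ⟨m, hm⟩ := eventually_atTop.1 hmono
  have hinit : ∀ᶠ n in atTop, ∀ i ∈ range m, R i ≤ R n :=
    (eventually_all_finset _).2 fun i _ => hR.eventually_ge_atTop (R i)
  filter_upwards [hinit] with n hn i hi
  rcases lt_or_ge i m with him | him
  · exact hn i (mem_range.2 him)
  · exact monotoneOn_nat_Ici_of_le_succ hm him (him.trans hi) hi

lemma le_pow_natAbs_mul_of_le_mul {𝕜 : Type*} [Semiring 𝕜] [PartialOrder 𝕜] [IsOrderedRing 𝕜]
    {T : ℕ → 𝕜} {ρ : 𝕜} {p : ℕ} (hρ : 0 ≤ ρ)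
    (hleft : ∀ k < p, T k ≤ ρ * T (k + 1)) (hright : ∀ k ≥ p, T (k + 1) ≤ ρ * T k) (k : ℕ) :
    T k ≤ ρ ^ ((k : ℤ) - p).natAbs * T p := by
  rcases le_total p k with hk | hk
  · induction k, hk using Nat.le_induction with
    | base => simp
    | succ k hk ih =>
      calc T (k + 1) ≤ ρ * (ρ ^ ((k : ℤ) - p).natAbs * T p) := (hright k hk).trans (by gcongr)
        _ = ρ ^ (((k + 1 : ℕ) : ℤ) - p).natAbs * T p := by
          rw [← mul_assoc, ← pow_succ']; congr 2; omega
  · induction hk using Nat.decreasingInduction with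
    | self => simp
    | of_succ k hk ih =>
      calc T k ≤ ρ * (ρ ^ (((k + 1 : ℕ) : ℤ) - p).natAbs * T p) :=
            (hleft k hk).trans (by gcongr)
        _ = ρ ^ ((k : ℤ) - p).natAbs * T p := by
          rw [← mul_assoc, ← pow_succ']; congr 2; omega

lemma exists_lt_one_tendsto_inv_of_le_succ {q : ℕ → ℝ} {m : ℕ} (h1 : 1 < q m)
    (hq : ∀ n, m ≤ n → q n ≤ q (n + 1)) :
    ∃ s < 1, Tendsto (fun n => (q n)⁻¹) atTop (𝓝 s) := by
  have hmono : Monotone fun n => q (n + m) :=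
    monotone_nat_of_le_succ fun n => by
      simpa only [add_right_comm] using hq (n + m) (Nat.le_add_left m n)
  have hm (n : ℕ) : q m ≤ q (n + m) := by simpa using hmono n.zero_le
  have hpos (n : ℕ) : 0 < q (n + m) := one_pos.trans (h1.trans_le (hm n))
  have hanti : Antitone fun n => (q (n + m))⁻¹ := fun i j hij => inv_anti₀ (hpos i) (hmono hij)
  have hbdd : BddBelow (Set.range fun n => (q (n + m))⁻¹) :=
    ⟨0, Set.forall_mem_range.2 fun n => (inv_pos.2 (hpos n)).le⟩
  refine ⟨_, (ciInf_le hbdd 0).trans_lt ?_,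
    (tendsto_add_atTop_iff_nat m).1 (tendsto_atTop_ciInf hanti hbdd)⟩
  rw [zero_add]
  exact inv_lt_one_of_one_lt₀ h1

lemma summable_pow_natAbs {ρ : ℝ} (h0 : 0 ≤ ρ) (h1 : ρ < 1) :
    Summable fun j : ℤ => ρ ^ j.natAbs := by
  have hgeom := summable_geometric_of_lt_one h0 h1
  exact Summable.of_nat_of_neg (by simpa using hgeom) (by simpa using hgeom)

/- By Jacobi's functional equation the alternating theta series is, up to a positive factor, the
sum of the Gaussian over `ℤ + 1 / 2`. -/
open HurwitzZeta in
lemma tsum_neg_one_zpow_mul_pow_sq_pos {t : ℝ} (h0 : 0 ≤ t) (h1 : t < 1) :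
    0 < ∑' j : ℤ, (-1 : ℝ) ^ j * t ^ j.natAbs ^ 2 := by
  rcases h0.eq_or_lt with rfl | ht
  · rw [tsum_eq_single 0 fun j hj => by simp [hj]]
    simp
  set τ := -Real.log t / Real.pi with hτ_def
  have hτ : 0 < τ := div_pos (neg_pos.2 (Real.log_neg ht h1)) Real.pi_pos
  have hterm (j : ℤ) : Complex.exp (2 * Real.pi * Complex.I * (1 / 2 : ℝ) * j)
      * Real.exp (-Real.pi * j ^ 2 * τ) = (((-1 : ℝ) ^ j * t ^ j.natAbs ^ 2 : ℝ) : ℂ) := by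
    have hsign : Complex.exp (2 * Real.pi * Complex.I * (1 / 2 : ℝ) * j) = (-1) ^ j := by
      rw [← Complex.exp_pi_mul_I, ← Complex.exp_int_mul]
      congr 1; push_cast; ring
    have hexp : Real.exp (-Real.pi * j ^ 2 * τ) = t ^ j.natAbs ^ 2 := by
      rw [← Real.exp_log (pow_pos ht (j.natAbs ^ 2)), Real.log_pow]
      congr 1; rw [hτ_def]; push_cast [Nat.cast_natAbs, sq_abs]; field_simp
    rw [hsign, hexp]; push_cast; rfl
  have hcos : HasSum (fun j : ℤ => (-1 : ℝ) ^ j * t ^ j.natAbs ^ 2)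
      (cosKernel ((1 / 2 : ℝ) : UnitAddCircle) τ) :=
    Complex.hasSum_ofReal.1 ((hasSum_int_cosKernel (1 / 2) hτ).congr_fun fun j => (hterm j).symm)
  have heven : 0 < evenKernel ((1 / 2 : ℝ) : UnitAddCircle) (1 / τ) := by
    have hsum := hasSum_int_evenKernel (1 / 2) (one_div_pos.2 hτ)
    rw [← hsum.tsum_eq]
    exact hsum.summable.tsum_pos (fun j => (Real.exp_pos _).le) 0 (Real.exp_pos _)
  rw [hcos.tsum_eq]
  rw [evenKernel_functional_equation, one_div_one_div] at heven
  exact pos_of_mul_pos_right heven (by positivity)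

end Sequences

/-- The ratio `a n / a (n + 1)`: the radius at which the terms of index `n` and `n + 1` of the power
series with coefficients `a` have the same modulus. -/
noncomputable def coeffRatio (a : ℕ → ℝ) (n : ℕ) : ℝ := a n / a (n + 1)

/-- The geometric mean of two consecutive coefficient ratios: the radius at which the term of index
`n + 1` of the power series dominates both of its neighbours by the same factor. -/
noncomputable def peakRadius (a : ℕ → ℝ) (n : ℕ) : ℝ := √(coeffRatio a n * coeffRatio a (n + 1))

section Coefficients

variable {a : ℕ → ℝ} {s t ρ : ℝ}

lemma coeffRatio_pos (ha : ∀ k, 0 < a k) (n : ℕ) : 0 < coeffRatio a n :=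
  div_pos (ha n) (ha (n + 1))

lemma peakRadius_pos (ha : ∀ k, 0 < a k) (n : ℕ) : 0 < peakRadius a n :=
  Real.sqrt_pos.2 (mul_pos (coeffRatio_pos ha n) (coeffRatio_pos ha (n + 1)))

lemma coeffRatio_div_coeffRatio_succ (a : ℕ → ℝ) (n : ℕ) :
    coeffRatio a n / coeffRatio a (n + 1) = (secondQuotient a (n + 2))⁻¹ := by
  simp only [coeffRatio, secondQuotient, div_div_div_eq, inv_div, Nat.add_sub_cancel, sq]
  rfl

lemma coeffRatio_div_peakRadius (ha : ∀ k, 0 < a k) (n : ℕ) :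
    coeffRatio a n / peakRadius a n = √(coeffRatio a n / coeffRatio a (n + 1)) := by
  have h0 := coeffRatio_pos ha n
  rw [peakRadius, Real.sqrt_mul h0.le, Real.sqrt_div h0.le, ← div_div, Real.div_sqrt]

lemma peakRadius_div_coeffRatio_succ (ha : ∀ k, 0 < a k) (n : ℕ) :
    peakRadius a n / coeffRatio a (n + 1) = √(coeffRatio a n / coeffRatio a (n + 1)) := by
  have h0 := coeffRatio_pos ha n
  rw [peakRadius, Real.sqrt_mul h0.le, Real.sqrt_div h0.le, mul_div_assoc, Real.sqrt_div_self,
    ← div_eq_mul_inv]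

lemma coeffRatio_le_peakRadius (ha : ∀ k, 0 < a k) {n : ℕ}
    (hn : coeffRatio a n ≤ coeffRatio a (n + 1)) : coeffRatio a n ≤ peakRadius a n := by
  have h0 := coeffRatio_pos ha n
  exact Real.le_sqrt_of_sq_le (by rw [sq]; gcongr)

lemma peakRadius_le_coeffRatio_succ (ha : ∀ k, 0 < a k) {n : ℕ}
    (hn : coeffRatio a n ≤ coeffRatio a (n + 1)) : peakRadius a n ≤ coeffRatio a (n + 1) := by
  have h1 := (coeffRatio_pos ha (n + 1)).le
  exact Real.sqrt_le_iff.2 ⟨h1, by rw [sq]; gcongr⟩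

lemma tendsto_coeffRatio_div_peakRadius (ha : ∀ k, 0 < a k) (ht : 0 ≤ t)
    (h : Tendsto (fun n => coeffRatio a n / coeffRatio a (n + 1)) atTop (𝓝 (t ^ 2))) :
    Tendsto (fun n => coeffRatio a n / peakRadius a n) atTop (𝓝 t) := by
  simpa only [coeffRatio_div_peakRadius ha, Real.sqrt_sq ht] using h.sqrt

lemma tendsto_peakRadius_div_coeffRatio_succ (ha : ∀ k, 0 < a k) (ht : 0 ≤ t)
    (h : Tendsto (fun n => coeffRatio a n / coeffRatio a (n + 1)) atTop (𝓝 (t ^ 2))) :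
    Tendsto (fun n => peakRadius a n / coeffRatio a (n + 1)) atTop (𝓝 t) := by
  simpa only [peakRadius_div_coeffRatio_succ ha, Real.sqrt_sq ht] using h.sqrt

lemma eventually_coeffRatio_lt_succ (ha : ∀ k, 0 < a k) (hs : s < 1)
    (h : Tendsto (fun n => coeffRatio a n / coeffRatio a (n + 1)) atTop (𝓝 s)) :
    ∀ᶠ n in atTop, coeffRatio a n < coeffRatio a (n + 1) :=
  (h.eventually_lt_const hs).mono fun n => (div_lt_one (coeffRatio_pos ha (n + 1))).1

lemma tendsto_peakRadius_atTop (ha : ∀ k, 0 < a k) (hs : s < 1)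
    (h : Tendsto (fun n => coeffRatio a n / coeffRatio a (n + 1)) atTop (𝓝 s)) :
    Tendsto (peakRadius a) atTop atTop :=
  tendsto_atTop_mono' atTop
    ((eventually_coeffRatio_lt_succ ha hs h).mono fun _ hn => coeffRatio_le_peakRadius ha hn.le)
    (tendsto_atTop_of_tendsto_div_succ_lt_one (coeffRatio_pos ha) hs h)

lemma eventually_peakRadius_lt_succ (ha : ∀ k, 0 < a k) (hs : s < 1)
    (h : Tendsto (fun n => coeffRatio a n / coeffRatio a (n + 1)) atTop (𝓝 s)) :
    ∀ᶠ n in atTop, peakRadius a n < peakRadius a (n + 1) := by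
  have hlt := eventually_coeffRatio_lt_succ ha hs h
  filter_upwards [hlt, (tendsto_add_atTop_nat 1).eventually hlt] with n h1 h2
  have h0 := coeffRatio_pos ha n
  have h1' := coeffRatio_pos ha (n + 1)
  exact Real.sqrt_lt_sqrt (mul_pos h0 h1').le (mul_lt_mul h1 h2.le h1' h1'.le)

lemma eventually_mul_peakRadius_pow_le (ha : ∀ k, 0 < a k) (ht0 : 0 ≤ t) (ht1 : t < 1)
    (h : Tendsto (fun n => coeffRatio a n / coeffRatio a (n + 1)) atTop (𝓝 (t ^ 2)))
    (hρ : t < ρ) :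
    ∀ᶠ n in atTop, ∀ k : ℕ, a k * peakRadius a n ^ k ≤
      ρ ^ ((k : ℤ) - (n + 1 : ℕ)).natAbs * (a (n + 1) * peakRadius a n ^ (n + 1)) := by
  have hs : t ^ 2 < 1 := pow_lt_one₀ ht0 ht1 two_ne_zero
  have hmono := (eventually_coeffRatio_lt_succ ha hs h).mono fun _ => le_of_lt
  have htop := tendsto_atTop_of_tendsto_div_succ_lt_one (coeffRatio_pos ha) hs h
  filter_upwards [(tendsto_coeffRatio_div_peakRadius ha ht0 h).eventually_lt_const hρ,
    (tendsto_peakRadius_div_coeffRatio_succ ha ht0 h).eventually_lt_const hρ,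
    eventually_forall_le_le_of_le_succ htop hmono,
    (tendsto_add_atTop_nat 1).eventually (eventually_forall_ge_le_of_le_succ hmono)]
    with n hleft hright hle hge
  rw [div_lt_iff₀ (peakRadius_pos ha n)] at hleft
  rw [div_lt_iff₀ (coeffRatio_pos ha (n + 1))] at hright
  have hr := peakRadius_pos ha n
  have hρ0 := ht0.trans hρ.le
  refine le_pow_natAbs_mul_of_le_mul (T := fun k => a k * peakRadius a n ^ k) hρ0 ?_ ?_
  · intro k hk
    have hk' : a k ≤ ρ * peakRadius a n * a (k + 1) :=
      (div_le_iff₀ (ha (k + 1))).1 ((hle k (Nat.lt_succ_iff.1 hk)).trans hleft.le)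
    calc a k * peakRadius a n ^ k ≤ ρ * peakRadius a n * a (k + 1) * peakRadius a n ^ k := by gcongr
      _ = ρ * (a (k + 1) * peakRadius a n ^ (k + 1)) := by ring
  · intro k hk
    have hk' : peakRadius a n * a (k + 1) ≤ ρ * a k := by
      rw [← le_div_iff₀ (ha (k + 1)), mul_div_assoc]
      exact hright.le.trans (mul_le_mul_of_nonneg_left (hge k hk) hρ0)
    calc a (k + 1) * peakRadius a n ^ (k + 1)
        = peakRadius a n * a (k + 1) * peakRadius a n ^ k := by ring
      _ ≤ ρ * a k * peakRadius a n ^ k := by gcongr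
      _ = ρ * (a k * peakRadius a n ^ k) := by ring

end Coefficients

/-- The moduli of the terms of the power series with coefficients `a` on the circle of radius
`peakRadius a n`, normalized by the dominant one and indexed by the offset from its index `n + 1`;
offsets below `-(n + 1)` give `0`. -/
noncomputable def centeredTerm (a : ℕ → ℝ) (n : ℕ) : ℤ → ℝ :=
  Function.extend (fun k : ℕ => (k : ℤ) - (n + 1 : ℕ))
    (fun k => a k * peakRadius a n ^ k / (a (n + 1) * peakRadius a n ^ (n + 1))) 0

section CenteredTerm

variable {a : ℕ → ℝ} {t ρ : ℝ}

lemma injective_natCast_sub (m : ℤ) : Function.Injective fun k : ℕ => (k : ℤ) - m :=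
  (sub_left_injective (b := m)).comp Nat.cast_injective

lemma centeredTerm_sub (a : ℕ → ℝ) (n k : ℕ) :
    centeredTerm a n ((k : ℤ) - (n + 1 : ℕ)) =
      a k * peakRadius a n ^ k / (a (n + 1) * peakRadius a n ^ (n + 1)) :=
  (injective_natCast_sub _).extend_apply _ _ k

lemma centeredTerm_eq_zero (a : ℕ → ℝ) {n : ℕ} {j : ℤ}
    (hj : j ∉ Set.range fun k : ℕ => (k : ℤ) - (n + 1 : ℕ)) : centeredTerm a n j = 0 :=
  Function.extend_apply' _ _ _ hj

lemma centeredTerm_natCast (ha : ∀ k, 0 < a k) (n k : ℕ) :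
    centeredTerm a n k = a (n + 1 + k) / a (n + 1) * peakRadius a n ^ k := by
  have hr := (peakRadius_pos ha n).ne'
  have hk : (k : ℤ) = (n + 1 + k : ℕ) - (n + 1 : ℕ) := by omega
  rw [hk, centeredTerm_sub, pow_add]
  field_simp

lemma centeredTerm_neg (ha : ∀ k, 0 < a k) {n k : ℕ} (hk : k ≤ n + 1) :
    centeredTerm a n (-k) = a (n + 1 - k) / a (n + 1) / peakRadius a n ^ k := by
  have hr := (peakRadius_pos ha n).ne'
  have hk' : -(k : ℤ) = (n + 1 - k : ℕ) - (n + 1 : ℕ) := by omega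
  rw [hk', centeredTerm_sub, ← Nat.sub_add_cancel hk, pow_add, Nat.add_sub_cancel]
  field_simp

lemma tendsto_centeredTerm_natCast (ha : ∀ k, 0 < a k) (ht : 0 ≤ t)
    (h : Tendsto (fun n => coeffRatio a n / coeffRatio a (n + 1)) atTop (𝓝 (t ^ 2))) (k : ℕ) :
    Tendsto (fun n => centeredTerm a n k) atTop (𝓝 (t ^ k ^ 2)) := by
  induction k with
  | zero =>
    refine tendsto_const_nhds.congr fun n => ?_
    rw [centeredTerm_natCast ha]
    simp [(ha _).ne']
  | succ k ih =>
    have hR (n : ℕ) := (coeffRatio_pos ha n).ne'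
    have hfactor : Tendsto (fun n => peakRadius a n / coeffRatio a (n + 1 + k)) atTop
        (𝓝 (t * (t ^ 2) ^ k)) := by
      refine ((tendsto_peakRadius_div_coeffRatio_succ ha ht h).mul
        ((tendsto_add_atTop_iff_nat 1).2 (tendsto_div_add_of_tendsto_div_succ hR h k))).congr
          fun n => ?_
      exact div_mul_div_cancel₀ (hR (n + 1))
    have hpow : t ^ (k + 1) ^ 2 = t ^ k ^ 2 * (t * (t ^ 2) ^ k) := by ring
    rw [hpow]
    refine (ih.mul hfactor).congr fun n => ?_
    have hk := (ha (n + 1 + k)).ne'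
    rw [centeredTerm_natCast ha, centeredTerm_natCast ha, coeffRatio, add_assoc (n + 1)]
    field_simp
    ring

lemma tendsto_centeredTerm_neg (ha : ∀ k, 0 < a k) (ht : 0 ≤ t)
    (h : Tendsto (fun n => coeffRatio a n / coeffRatio a (n + 1)) atTop (𝓝 (t ^ 2))) (k : ℕ) :
    Tendsto (fun n => centeredTerm a n (-k)) atTop (𝓝 (t ^ k ^ 2)) := by
  induction k with
  | zero => simpa using tendsto_centeredTerm_natCast ha ht h 0
  | succ k ih =>
    have hR (n : ℕ) := (coeffRatio_pos ha n).ne'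
    have hfactor : Tendsto (fun n => coeffRatio a (n - k) / peakRadius a n) atTop
        (𝓝 ((t ^ 2) ^ k * t)) := by
      have hshift : Tendsto (fun n => coeffRatio a (n - k) / coeffRatio a n) atTop
          (𝓝 ((t ^ 2) ^ k)) :=
        (tendsto_add_atTop_iff_nat k).1 (by simpa using tendsto_div_add_of_tendsto_div_succ hR h k)
      refine (hshift.mul (tendsto_coeffRatio_div_peakRadius ha ht h)).congr fun n => ?_
      exact div_mul_div_cancel₀ (hR n)
    have hpow : t ^ (k + 1) ^ 2 = t ^ k ^ 2 * ((t ^ 2) ^ k * t) := by ring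
    rw [hpow]
    refine (ih.mul hfactor).congr' ?_
    filter_upwards [eventually_ge_atTop k] with n hn
    have hk := (ha (n - k + 1)).ne'
    have hr := (peakRadius_pos ha n).ne'
    rw [centeredTerm_neg ha (by omega), centeredTerm_neg ha (by omega), coeffRatio,
      Nat.sub_add_comm hn, Nat.add_sub_add_right]
    field_simp
    ring

lemma tendsto_centeredTerm (ha : ∀ k, 0 < a k) (ht : 0 ≤ t)
    (h : Tendsto (fun n => coeffRatio a n / coeffRatio a (n + 1)) atTop (𝓝 (t ^ 2))) (j : ℤ) :
    Tendsto (fun n => centeredTerm a n j) atTop (𝓝 (t ^ j.natAbs ^ 2)) := by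
  obtain ⟨k, rfl | rfl⟩ := j.eq_nat_or_neg
  · simpa using tendsto_centeredTerm_natCast ha ht h k
  · simpa using tendsto_centeredTerm_neg ha ht h k

lemma eventually_abs_centeredTerm_le (ha : ∀ k, 0 < a k) (ht0 : 0 ≤ t) (ht1 : t < 1)
    (h : Tendsto (fun n => coeffRatio a n / coeffRatio a (n + 1)) atTop (𝓝 (t ^ 2)))
    (hρ : t < ρ) : ∀ᶠ n in atTop, ∀ j : ℤ, |centeredTerm a n j| ≤ ρ ^ j.natAbs := by
  filter_upwards [eventually_mul_peakRadius_pow_le ha ht0 ht1 h hρ] with n hn j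
  have hr := peakRadius_pos ha n
  by_cases hj : j ∈ Set.range fun k : ℕ => (k : ℤ) - (n + 1 : ℕ)
  · obtain ⟨k, rfl⟩ := hj
    have hpos (i : ℕ) : 0 < a i * peakRadius a n ^ i := mul_pos (ha i) (pow_pos hr i)
    rw [centeredTerm_sub, abs_of_pos (div_pos (hpos _) (hpos _)), div_le_iff₀ (hpos _)]
    exact hn k
  · have hρ0 := ht0.trans hρ.le
    rw [centeredTerm_eq_zero a hj, abs_zero]
    positivity

lemma hasSum_neg_one_zpow_mul_centeredTerm {n : ℕ} {y : ℝ}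
    (hy : HasSum (fun k => a k * (-peakRadius a n) ^ k) y) :
    HasSum (fun j : ℤ => (-1) ^ j * centeredTerm a n j)
      ((-1) ^ (n + 1) * y / (a (n + 1) * peakRadius a n ^ (n + 1))) := by
  rw [← (injective_natCast_sub (n + 1 : ℕ)).hasSum_iff]
  · refine ((hy.mul_left ((-1) ^ (n + 1))).div_const _).congr_fun fun k => ?_
    have hsign : (-1 : ℝ) ^ ((k : ℤ) - (n + 1 : ℕ)) = (-1) ^ (n + 1) * (-1) ^ k := by
      rw [zpow_sub₀ (by norm_num), zpow_natCast, zpow_natCast, div_eq_mul_inv, ← inv_pow,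
        inv_neg_one, mul_comm]
    rw [Function.comp_apply, centeredTerm_sub, hsign, neg_pow (peakRadius a n)]
    ring
  · intro j hj
    rw [centeredTerm_eq_zero a hj, mul_zero]

lemma eventually_neg_one_pow_mul_apply_neg_peakRadius_pos (ha : ∀ k, 0 < a k) (ht0 : 0 ≤ t)
    (ht1 : t < 1)
    (h : Tendsto (fun n => coeffRatio a n / coeffRatio a (n + 1)) atTop (𝓝 (t ^ 2)))
    {F : ℝ → ℝ} (hF : ∀ x, HasSum (fun k => a k * x ^ k) (F x)) :
    ∀ᶠ n in atTop, 0 < (-1) ^ (n + 1) * F (-peakRadius a n) := by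
  obtain ⟨ρ, htρ, hρ1⟩ := exists_between ht1
  have hlim : Tendsto (fun n => ∑' j : ℤ, (-1) ^ j * centeredTerm a n j) atTop
      (𝓝 (∑' j : ℤ, (-1) ^ j * t ^ j.natAbs ^ 2)) := by
    refine tendsto_tsum_of_dominated_convergence (summable_pow_natAbs (ht0.trans htρ.le) hρ1)
      (fun j => (tendsto_centeredTerm ha ht0 h j).const_mul _) ?_
    filter_upwards [eventually_abs_centeredTerm_le ha ht0 ht1 h htρ] with n hn j
    simpa using hn j
  filter_upwards [hlim.eventually_const_lt (tsum_neg_one_zpow_mul_pow_sq_pos ht0 ht1)] with n hn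
  rw [(hasSum_neg_one_zpow_mul_centeredTerm (hF (-peakRadius a n))).tsum_eq] at hn
  exact (div_pos_iff_of_pos_right (mul_pos (ha _) (pow_pos (peakRadius_pos ha n) _))).1 hn

end CenteredTerm

section Entire

lemma differentiable_of_forall_hasSum_mul_pow {c : ℕ → ℂ} {f : ℂ → ℂ}
    (hf : ∀ z, HasSum (fun k => c k * z ^ k) (f z)) : Differentiable ℂ f := by
  intro z
  have hz : z ∈ Metric.ball (0 : ℂ) (‖z‖ + 1) := by simp
  have hdiff : DifferentiableOn ℂ (fun w => ∑' k, c k * w ^ k) (Metric.ball 0 (‖z‖ + 1)) := by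
    refine Complex.differentiableOn_tsum_of_summable_norm (hf (‖z‖ + 1 : ℝ)).summable.norm
      (fun k => by fun_prop) Metric.isOpen_ball fun k w hw => ?_
    rw [norm_mul, norm_mul, norm_pow, norm_pow, Complex.norm_of_nonneg (by positivity)]
    gcongr
    exact (mem_ball_zero_iff.1 hw).le
  rw [funext fun w => (hf w).tsum_eq] at hdiff
  exact (hdiff z hz).differentiableAt (Metric.isOpen_ball.mem_nhds hz)

lemma eq_coeff_zero_of_hasSum_mul_zero_pow {R : Type*} [Semiring R] [TopologicalSpace R] [T2Space R]
    {c : ℕ → R} {y : R} (hy : HasSum (fun k => c k * 0 ^ k) y) : y = c 0 := by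
  refine hy.unique ?_
  simpa using hasSum_single (f := fun k => c k * 0 ^ k) 0 fun k hk => by simp [hk]

variable {a : ℕ → ℝ} {f : ℂ → ℂ} {t : ℝ}

lemma hasSum_re_of_hasSum_ofReal {x : ℝ} (hf : HasSum (fun k => (a k : ℂ) * (x : ℂ) ^ k) (f x)) :
    HasSum (fun k => a k * x ^ k) (f x).re := by
  simpa [← Complex.ofReal_pow, ← Complex.ofReal_mul] using Complex.hasSum_re hf

lemma ofReal_re_of_hasSum_ofReal {x : ℝ} (hf : HasSum (fun k => (a k : ℂ) * (x : ℂ) ^ k) (f x)) :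
    ((f x).re : ℂ) = f x :=
  (Complex.hasSum_ofReal.2 (hasSum_re_of_hasSum_ofReal hf)).unique (by simpa using hf)

lemma exists_eventually_norm_le_mul_peakRadius_pow (ha : ∀ k, 0 < a k) (ht0 : 0 ≤ t) (ht1 : t < 1)
    (h : Tendsto (fun n => coeffRatio a n / coeffRatio a (n + 1)) atTop (𝓝 (t ^ 2)))
    (hf : ∀ z, HasSum (fun k => (a k : ℂ) * z ^ k) (f z)) :
    ∃ K > 0, ∀ᶠ n in atTop, ∀ z, ‖z‖ = peakRadius a n →
      ‖f z‖ ≤ K * (a (n + 1) * peakRadius a n ^ (n + 1)) := by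
  obtain ⟨ρ, htρ, hρ1⟩ := exists_between ht1
  have hρ0 : 0 ≤ ρ := ht0.trans htρ.le
  have hsum := summable_pow_natAbs hρ0 hρ1
  refine ⟨∑' j : ℤ, ρ ^ j.natAbs, hsum.tsum_pos (fun j => by positivity) 0 (by simp), ?_⟩
  filter_upwards [eventually_mul_peakRadius_pow_le ha ht0 ht1 h htρ] with n hn z hz
  have hinj := injective_natCast_sub (n + 1 : ℕ)
  have hnorm (k : ℕ) : ‖(a k : ℂ) * z ^ k‖ = a k * peakRadius a n ^ k := by
    rw [norm_mul, norm_pow, hz, Complex.norm_of_nonneg (ha k).le]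
  calc ‖f z‖ ≤ (∑' k : ℕ, ρ ^ ((k : ℤ) - (n + 1 : ℕ)).natAbs) *
        (a (n + 1) * peakRadius a n ^ (n + 1)) :=
        (hf z).norm_le_of_bounded ((hsum.comp_injective hinj).hasSum.mul_right _)
          fun k => (hnorm k).trans_le (hn k)
    _ ≤ _ := by
      have hr := peakRadius_pos ha n
      have hc := ha (n + 1)
      gcongr
      exact tsum_comp_le_tsum_of_inj hsum (fun j => by positivity) hinj

lemma eventually_exists_zero_mem_Ioo (ha : ∀ k, 0 < a k) (ht0 : 0 ≤ t) (ht1 : t < 1)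
    (h : Tendsto (fun n => coeffRatio a n / coeffRatio a (n + 1)) atTop (𝓝 (t ^ 2)))
    (hf : ∀ z, HasSum (fun k => (a k : ℂ) * z ^ k) (f z)) :
    ∀ᶠ n in atTop, ∃ x : ℝ, x ∈ Set.Ioo (peakRadius a n) (peakRadius a (n + 1)) ∧
      f (-x : ℝ) = 0 := by
  have hpos := eventually_neg_one_pow_mul_apply_neg_peakRadius_pos ha ht0 ht1 h
    (F := fun x => (f x).re) fun x => hasSum_re_of_hasSum_ofReal (hf x)
  filter_upwards [hpos, (tendsto_add_atTop_nat 1).eventually hpos,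
    eventually_peakRadius_lt_succ ha (pow_lt_one₀ ht0 ht1 two_ne_zero) h] with n h1 h2 hlt
  have hcont : Continuous fun x : ℝ => (-1) ^ (n + 1) * (f (-x : ℝ)).re := by
    have := (differentiable_of_forall_hasSum_mul_pow hf).continuous
    fun_prop
  rw [pow_succ, mul_neg_one, neg_mul, neg_pos] at h2
  obtain ⟨x, hx, hzero⟩ := intermediate_value_Ioo' hlt.le hcont.continuousOn ⟨h2, h1⟩
  have hre := (mul_eq_zero.1 hzero).resolve_left (pow_ne_zero _ (by norm_num))
  refine ⟨x, hx, ?_⟩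
  rw [← ofReal_re_of_hasSum_ofReal (hf _), hre, Complex.ofReal_zero]

end Entire

section Jensen

open Metric MeromorphicOn

variable {f : ℂ → ℂ} {c : ℂ} {R M : ℝ}

lemma finsum_divisor_mul_log_le_neg_log_norm (hR : 0 < R)
    (hf : AnalyticOnNhd ℂ f (closedBall c |R|)) (hc : f c ≠ 0)
    (hbound : ∀ z ∈ sphere c |R|, ‖f z‖ ≤ 1) :
    ∑ᶠ u, divisor f (closedBall c |R|) u * Real.log (R * ‖c - u‖⁻¹) ≤ -Real.log ‖f c‖ := by
  have havg : Real.circleAverage (Real.log ‖f ·‖) c R ≤ 0 :=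
    Real.circleAverage_mono_on_of_le_circle
      (hf.mono sphere_subset_closedBall).meromorphicOn.circleIntegrable_log_norm
      fun z hz => Real.log_nonpos (norm_nonneg _) (hbound z hz)
  rw [hf.circleAverage_log_norm hR.ne' hc] at havg
  linarith

lemma natCast_le_divisor (hf : AnalyticOnNhd ℂ f (closedBall c R)) (hc : f c ≠ 0) {u : ℂ}
    (hu : u ∈ closedBall c R) {n : ℕ} (hn : n ≤ analyticOrderAt f u) :
    (n : ℤ) ≤ divisor f (closedBall c R) u := by
  have hcR : c ∈ closedBall c R := mem_closedBall_self (dist_nonneg.trans hu)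
  have hfin : analyticOrderAt f u ≠ ⊤ := by
    refine hf.analyticOrderAt_ne_top_of_isPreconnected (convex_closedBall c R).isPreconnected
      hcR hu ?_
    rw [(hf c hcR).analyticOrderAt_eq_zero.2 hc]
    exact ENat.zero_ne_top
  obtain ⟨k, hk⟩ := ENat.ne_top_iff_exists.1 hfin
  rw [hf.divisor_apply hu]
  rw [← hk] at hn ⊢
  simpa using hn

lemma sum_count_mul_log_le_finsum_divisor (hf : AnalyticOnNhd ℂ f (closedBall c |R|))
    (hR : 0 < R) (hc : f c ≠ 0) (Z : Multiset ℂ) (hZ : ∀ u ∈ Z, u ∈ closedBall c |R|)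
    (hcount : ∀ u, Z.count u ≤ analyticOrderAt f u) :
    ∑ u ∈ Z.toFinset, Z.count u * Real.log (R * ‖c - u‖⁻¹) ≤
      ∑ᶠ u, divisor f (closedBall c |R|) u * Real.log (R * ‖c - u‖⁻¹) := by
  have hsupp : (Function.support fun u => Z.count u * Real.log (R * ‖c - u‖⁻¹)) ⊆ Z.toFinset :=
    fun u hu => by simpa using left_ne_zero_of_mul hu
  rw [← finsum_eq_sum_of_support_subset _ hsupp]
  refine finsum_le_finsum' (Z.toFinset.finite_toSet.subset hsupp) ?_ fun u => ?_
  · exact ((divisor f (closedBall c |R|)).finiteSupport (isCompact_closedBall ..)).subset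
      fun u hu => by simpa using left_ne_zero_of_mul hu
  · by_cases hu : u ∈ closedBall c |R|
    · have hle : (Z.count u : ℝ) ≤ (divisor f (closedBall c |R|) u : ℝ) :=
        mod_cast natCast_le_divisor hf hc hu (hcount u)
      have hlog : 0 ≤ Real.log (R * ‖c - u‖⁻¹) := by
        rcases eq_or_ne c u with rfl | hcu
        · simp
        · refine Real.log_nonneg ?_
          rw [← div_eq_mul_inv, one_le_div (norm_pos_iff.2 (sub_ne_zero.2 hcu))]
          simpa [dist_eq_norm', abs_of_pos hR] using hu
      gcongr
    · simp [Multiset.count_eq_zero.2 (mt (hZ u) hu), hu]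

lemma multiset_prod_mul_norm_center_le_one (hR : 0 < R) (hf : AnalyticOnNhd ℂ f (closedBall c |R|))
    (hc : f c ≠ 0) (hbound : ∀ z ∈ sphere c |R|, ‖f z‖ ≤ 1) (Z : Multiset ℂ)
    (hZ : ∀ u ∈ Z, u ∈ closedBall c |R|) (hcount : ∀ u, Z.count u ≤ analyticOrderAt f u) :
    (Z.map fun u => R * ‖c - u‖⁻¹).prod * ‖f c‖ ≤ 1 := by
  have hpos : ∀ u ∈ Z, 0 < R * ‖c - u‖⁻¹ := by
    intro u hu
    have hcu : c ≠ u := by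
      rintro rfl
      have horder := hcount c
      rw [(hf c (hZ c hu)).analyticOrderAt_eq_zero.2 hc] at horder
      exact Multiset.count_ne_zero.2 hu (by simpa using horder)
    have := norm_pos_iff.2 (sub_ne_zero.2 hcu)
    positivity
  have hprod : (Z.map fun u => R * ‖c - u‖⁻¹).prod =
      Real.exp (∑ u ∈ Z.toFinset, Z.count u * Real.log (R * ‖c - u‖⁻¹)) := by
    rw [Finset.prod_multiset_map_count, Real.exp_sum]
    refine Finset.prod_congr rfl fun u hu => ?_
    rw [Real.exp_nat_mul, Real.exp_log (hpos u (Multiset.mem_toFinset.1 hu))]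
  have hfc := norm_pos_iff.2 hc
  rw [hprod, ← le_div_iff₀ hfc, one_div]
  calc _ ≤ Real.exp (-Real.log ‖f c‖) := Real.exp_le_exp.2 <|
        (sum_count_mul_log_le_finsum_divisor hf hR hc Z hZ hcount).trans
          (finsum_divisor_mul_log_le_neg_log_norm hR hf hc hbound)
    _ = ‖f c‖⁻¹ := by rw [Real.exp_neg, Real.exp_log hfc]

lemma multiset_prod_mul_norm_center_le (hR : 0 < R) (hf : AnalyticOnNhd ℂ f (closedBall c |R|))
    (hc : f c ≠ 0) (hM : 0 < M) (hbound : ∀ z ∈ sphere c |R|, ‖f z‖ ≤ M) (Z : Multiset ℂ)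
    (hZ : ∀ u ∈ Z, u ∈ closedBall c |R|) (hcount : ∀ u, Z.count u ≤ analyticOrderAt f u) :
    (Z.map fun u => R * ‖c - u‖⁻¹).prod * ‖f c‖ ≤ M := by
  have hM' : (M : ℂ) ≠ 0 := Complex.ofReal_ne_zero.2 hM.ne'
  have hconst (u : ℂ) : AnalyticAt ℂ (fun _ => (M : ℂ)⁻¹) u := analyticAt_const
  let g : ℂ → ℂ := (fun _ => (M : ℂ)⁻¹) * f
  have horder : ∀ u ∈ closedBall c |R|,
      analyticOrderAt g u = analyticOrderAt f u := by
    intro u hu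
    rw [analyticOrderAt_mul (hconst u) (hf u hu),
      (hconst u).analyticOrderAt_eq_zero.2 (inv_ne_zero hM'), zero_add]
  have hnorm (z : ℂ) : ‖g z‖ = M⁻¹ * ‖f z‖ := by
    simp [g, abs_of_pos hM]
  have hscaled := multiset_prod_mul_norm_center_le_one (f := g) hR
    (fun u hu => (hconst u).mul (hf u hu)) (mul_ne_zero (inv_ne_zero hM') hc)
    (fun z hz => by rw [hnorm, inv_mul_le_one₀ hM]; exact hbound z hz) Z hZ ?_
  · rwa [hnorm, mul_left_comm, inv_mul_le_one₀ hM] at hscaled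
  · intro u
    by_cases hu : u ∈ Z
    · exact (hcount u).trans (horder u (hZ u hu)).ge
    · simp [Multiset.count_eq_zero.2 hu]

lemma prod_mul_prod_mul_norm_center_le (hf : Differentiable ℂ f) (hR : 0 < R)
    (hc : f c ≠ 0) (hM : 0 < M) (hbound : ∀ z ∈ sphere c R, ‖f z‖ ≤ M) {X B : Finset ℂ}
    (hXR : ↑X ⊆ closedBall c R) (hBR : ↑B ⊆ closedBall c R) (hX : ∀ u ∈ X, f u = 0)
    (hB : ∀ u ∈ B, f u = 0) (hXB : ∀ u ∈ X ∩ B, deriv f u = 0) :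
    (∏ u ∈ X, R * ‖c - u‖⁻¹) * (∏ u ∈ B, R * ‖c - u‖⁻¹) * ‖f c‖ ≤ M := by
  rw [← abs_of_pos hR] at hXR hBR hbound
  have hcount (u : ℂ) : ((X.val + B.val).count u : ℕ∞) ≤ analyticOrderAt f u := by
    rw [natCast_le_analyticOrderAt_iff_iteratedDeriv_eq_zero (hf.analyticAt u), Multiset.count_add]
    intro i hi
    have hXle := Multiset.nodup_iff_count_le_one.1 X.nodup u
    have hBle := Multiset.nodup_iff_count_le_one.1 B.nodup u
    have hmem : u ∈ X ∨ u ∈ B := by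
      by_contra! h
      simp [Multiset.count_eq_zero.2 h.1, Multiset.count_eq_zero.2 h.2] at hi
    obtain rfl | rfl : i = 0 ∨ i = 1 := by omega
    · simpa using hmem.elim (hX u) (hB u)
    · rw [iteratedDeriv_one]
      have hX1 : u ∈ X.val := Multiset.count_pos.1 (by omega)
      have hB1 : u ∈ B.val := Multiset.count_pos.1 (by omega)
      exact hXB u (mem_inter.2 ⟨hX1, hB1⟩)
  have hZ : ∀ u ∈ X.val + B.val, u ∈ closedBall c |R| := fun u hu =>
    (Multiset.mem_add.1 hu).elim (fun h => hXR h) (fun h => hBR h)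
  have hprod := multiset_prod_mul_norm_center_le hR (fun z _ => hf.analyticAt z) hc hM hbound _ hZ
    hcount
  rwa [Multiset.map_add, Multiset.prod_add] at hprod

end Jensen

/-- The zeros of `f` that fail to be real and simple, whose number is bounded by means of Jensen's
formula. -/
def exceptionalZeros (f : ℂ → ℂ) : Set ℂ := {z | f z = 0 ∧ ¬(z.im = 0 ∧ deriv f z ≠ 0)}

section Counting

variable {a x : ℕ → ℝ} {f : ℂ → ℂ} {B : Finset ℂ} {K t : ℝ} {M : ℕ}

lemma prod_coeffRatio (ha : ∀ k, 0 < a k) (M m : ℕ) :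
    ∏ i ∈ range m, coeffRatio a (M + i) = a M / a (M + m) := by
  induction m with
  | zero => simp [(ha M).ne']
  | succ m ih => rw [prod_range_succ, ih, coeffRatio, div_mul_div_cancel₀ (ha _).ne', add_assoc]

lemma pow_mul_coeff_div_le_prod (ha : ∀ k, 0 < a k) {r : ℝ} (hr : 0 < r) (hx : ∀ i, 0 < x i)
    (hxR : ∀ i, x i ≤ coeffRatio a (M + i)) (m : ℕ) :
    r ^ m * (a (M + m) / a M) ≤ ∏ i ∈ range m, r * (x i)⁻¹ := by
  rw [prod_mul_distrib, prod_const, card_range, prod_inv_distrib, ← inv_div, ← prod_coeffRatio ha]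
  gcongr with i
  · exact prod_pos fun i _ => hx i
  · exact fun i _ => (hx i).le
  · exact hxR i

lemma prod_mul_pow_card_div_mul_norm_le (hf : Differentiable ℂ f) (h0 : f 0 ≠ 0) (hK : 0 < K)
    (hx : ∀ i, 0 < x i) (hinj : Function.Injective x) (hxf : ∀ i, f (-x i : ℝ) = 0)
    (hB : ↑B ⊆ exceptionalZeros f) {r : ℝ} (hr : 0 < r) {m : ℕ} (hxr : ∀ i < m, x i ≤ r)
    (hBr : ∀ u ∈ B, ‖u‖ ≤ r) (hbound : ∀ z, ‖z‖ = r → ‖f z‖ ≤ K) :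
    (∏ i ∈ range m, r * (x i)⁻¹) * (r ^ #B / ∏ u ∈ B, ‖u‖) * ‖f 0‖ ≤ K := by
  let X : Finset ℂ := (range m).image fun i => ((-x i : ℝ) : ℂ)
  have hnorm (i : ℕ) : ‖((-x i : ℝ) : ℂ)‖ = x i := by simp [abs_of_pos (hx i)]
  have hXmem {u : ℂ} (hu : u ∈ X) : ∃ i < m, ((-x i : ℝ) : ℂ) = u := by simpa [X] using hu
  have hXprod : ∏ u ∈ X, r * ‖0 - u‖⁻¹ = ∏ i ∈ range m, r * (x i)⁻¹ := by
    rw [prod_image fun i _ j _ hij => hinj (neg_injective (Complex.ofReal_injective hij))]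
    simp only [zero_sub, norm_neg, hnorm]
  have hBprod : ∏ u ∈ B, r * ‖0 - u‖⁻¹ = r ^ #B / ∏ u ∈ B, ‖u‖ := by
    simp [prod_mul_distrib, div_eq_mul_inv]
  rw [← hXprod, ← hBprod]
  refine prod_mul_prod_mul_norm_center_le hf hr h0 hK
    (fun z hz => hbound z (mem_sphere_zero_iff_norm.1 hz)) (fun u hu => ?_)
    (fun u hu => mem_closedBall_zero_iff.2 (hBr u hu)) (fun u hu => ?_)
    (fun u hu => (hB hu).1) fun u hu => ?_
  · obtain ⟨i, hi, rfl⟩ := hXmem hu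
    exact mem_closedBall_zero_iff.2 ((hnorm i).trans_le (hxr i hi))
  · obtain ⟨i, -, rfl⟩ := hXmem hu
    exact hxf i
  · obtain ⟨i, -, rfl⟩ := hXmem (mem_of_mem_inter_left hu)
    exact not_not.1 fun h => (hB (mem_of_mem_inter_right hu)).2 ⟨Complex.ofReal_im _, h⟩

lemma pow_card_mul_norm_le (ha : ∀ k, 0 < a k) (hf : Differentiable ℂ f) (h0 : f 0 ≠ 0)
    (hK : 0 < K) (hx : ∀ i, 0 < x i) (hinj : Function.Injective x)
    (hxf : ∀ i, f (-x i : ℝ) = 0) (hxR : ∀ i, x i ≤ coeffRatio a (M + i))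
    (hB : ↑B ⊆ exceptionalZeros f) {r : ℝ} (hr : 0 < r) {m : ℕ} (hxr : ∀ i < m, x i ≤ r)
    (hBr : ∀ u ∈ B, ‖u‖ ≤ r)
    (hbound : ∀ z, ‖z‖ = r → ‖f z‖ ≤ K * (a (M + m) * r ^ (M + m))) :
    r ^ #B * ‖f 0‖ ≤ K * a M * (∏ u ∈ B, ‖u‖) * r ^ M := by
  have hM := ha M
  have hMm := ha (M + m)
  have hBpos : 0 < ∏ u ∈ B, ‖u‖ :=
    prod_pos fun u hu => norm_pos_iff.2 fun h => h0 (h ▸ (hB hu).1)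
  have hzeros : r ^ m * (a (M + m) / a M) * (r ^ #B / ∏ u ∈ B, ‖u‖) * ‖f 0‖ ≤
      K * (a (M + m) * r ^ (M + m)) :=
    calc _ ≤ (∏ i ∈ range m, r * (x i)⁻¹) * (r ^ #B / ∏ u ∈ B, ‖u‖) * ‖f 0‖ := by
          gcongr
          exact pow_mul_coeff_div_le_prod ha hr hx hxR m
      _ ≤ _ := prod_mul_pow_card_div_mul_norm_le hf h0 (by positivity) hx hinj hxf hB hr hxr hBr
          hbound
  rw [pow_add] at hzeros
  field_simp at hzeros
  linarith

lemma card_le_of_subset_exceptionalZeros (ha : ∀ k, 0 < a k) (hf : Differentiable ℂ f)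
    (h0 : f 0 ≠ 0) (hK : 0 < K) (hx : ∀ i, 0 < x i) (hinj : Function.Injective x)
    (hxf : ∀ i, f (-x i : ℝ) = 0) (hxR : ∀ i, x i ≤ coeffRatio a (M + i)) {r : ℕ → ℝ}
    (hr : Tendsto r atTop atTop) (hxr : ∀ m, ∀ i < m, x i ≤ r m)
    (hbound : ∀ m z, ‖z‖ = r m → ‖f z‖ ≤ K * (a (M + m) * r m ^ (M + m)))
    (hB : ↑B ⊆ exceptionalZeros f) : #B ≤ M := by
  have hbig : (fun m => r m ^ #B) =O[atTop] fun m => r m ^ M := by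
    refine Asymptotics.IsBigO.of_bound (K * a M * (∏ u ∈ B, ‖u‖) / ‖f 0‖) ?_
    filter_upwards [hr.eventually_gt_atTop 0,
      (eventually_all_finset B).2 fun u _ => hr.eventually_ge_atTop ‖u‖] with m hm hBm
    have hpow (k : ℕ) : ‖r m ^ k‖ = r m ^ k := Real.norm_of_nonneg (pow_pos hm k).le
    rw [hpow, hpow, div_mul_eq_mul_div, le_div_iff₀ (norm_pos_iff.2 h0)]
    exact pow_card_mul_norm_le ha hf h0 hK hx hinj hxf hxR hB hm (hxr m) hBm (hbound m)
  by_contra! hlt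
  refine ((Asymptotics.isLittleO_pow_pow_atTop_of_lt hlt).comp_tendsto hr).not_isBigO ?_ hbig
  exact (hr.eventually_gt_atTop 0).frequently.mono fun m hm => (pow_pos hm M).ne'

lemma finite_exceptionalZeros (ha : ∀ k, 0 < a k)
    (hf : ∀ z, HasSum (fun k => (a k : ℂ) * z ^ k) (f z)) (ht0 : 0 ≤ t) (ht1 : t < 1)
    (h : Tendsto (fun n => coeffRatio a n / coeffRatio a (n + 1)) atTop (𝓝 (t ^ 2))) :
    (exceptionalZeros f).Finite := by
  have hs : t ^ 2 < 1 := pow_lt_one₀ ht0 ht1 two_ne_zero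
  obtain ⟨K, hK, hbound⟩ := exists_eventually_norm_le_mul_peakRadius_pow ha ht0 ht1 h hf
  obtain ⟨N, hN⟩ := eventually_atTop.1 <| (eventually_exists_zero_mem_Ioo ha ht0 ht1 h hf).and <|
    hbound.and <| (eventually_coeffRatio_lt_succ ha hs h).and <|
      eventually_peakRadius_lt_succ ha hs h
  choose x hxmem hxf using fun i => (hN (N + i) (N.le_add_right i)).1
  have hmono : StrictMono fun i => peakRadius a (N + i) :=
    strictMono_nat_of_lt_succ fun i => (hN (N + i) (N.le_add_right i)).2.2.2
  have hxmono : StrictMono x :=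
    strictMono_nat_of_lt_succ fun i => (hxmem i).2.trans (hxmem (i + 1)).1
  by_contra hinf
  obtain ⟨B, hB, hcard⟩ := Set.Infinite.exists_subset_card_eq hinf (N + 2 + 1)
  suffices #B ≤ N + 2 by omega
  refine card_le_of_subset_exceptionalZeros ha
    (differentiable_of_forall_hasSum_mul_pow hf) ?_ hK
    (fun i => (peakRadius_pos ha _).trans (hxmem i).1) hxmono.injective hxf (fun i => ?_)
    (r := fun m => peakRadius a (N + (m + 1))) ?_ (fun m i hi => ?_) (fun m => ?_) hB
  · rw [eq_coeff_zero_of_hasSum_mul_zero_pow (hf 0)]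
    exact Complex.ofReal_ne_zero.2 (ha 0).ne'
  · have hle := peakRadius_le_coeffRatio_succ ha (hN (N + (i + 1)) (by omega)).2.2.1.le
    rw [add_right_comm N 2 i]
    exact (hxmem i).2.le.trans hle
  · exact (tendsto_peakRadius_atTop ha hs h).comp <|
      tendsto_atTop_mono (fun m => (m.le_succ.trans (Nat.le_add_left _ N))) tendsto_id
  · exact (hxmem i).2.le.trans (hmono.monotone (Nat.succ_le_succ hi.le))
  · rw [add_right_comm N 2 m]
    exact (hN (N + (m + 1)) (by omega)).2.1

end Counting

theorem stmt0_general {a : ℕ → ℝ} {f : ℂ → ℂ} {s : ℝ} (ha : ∀ k, 0 < a k)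
    (hf : ∀ z : ℂ, HasSum (fun k : ℕ => (a k : ℂ) * z ^ k) (f z)) (hs : s < 1)
    (hlim : Tendsto (fun n => (secondQuotient a n)⁻¹) atTop (𝓝 s)) :
    ∃ S : Set ℂ, S.Finite ∧ ∀ z : ℂ, f z = 0 → z ∉ S → z.im = 0 ∧ deriv f z ≠ 0 := by
  have hratio : Tendsto (fun n => coeffRatio a n / coeffRatio a (n + 1)) atTop (𝓝 s) := by
    simpa only [coeffRatio_div_coeffRatio_succ] using (tendsto_add_atTop_iff_nat 2).2 hlim
  have hs0 : 0 ≤ s := ge_of_tendsto' hratio fun n =>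
    (div_pos (coeffRatio_pos ha n) (coeffRatio_pos ha (n + 1))).le
  rw [← Real.sq_sqrt hs0] at hratio
  have hfin := finite_exceptionalZeros ha hf (Real.sqrt_nonneg s)
    (by rwa [Real.sqrt_lt' one_pos, one_pow]) hratio
  exact ⟨_, hfin, fun z hz hzS => not_not.1 fun hne => hzS ⟨hz, hne⟩⟩

theorem stmt0 (a : ℕ → ℝ) (f : ℂ → ℂ)
    (ha : ∀ k, 0 < a k)
    (hf : ∀ z : ℂ, HasSum (fun k : ℕ => (a k : ℂ) * z ^ k) (f z))
    (hq2 : 2 * (2 : ℝ) ^ ((1 : ℝ) / 3) ≤ secondQuotient a 2)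
    (hmono : ∀ n : ℕ, 2 ≤ n → secondQuotient a n ≤ secondQuotient a (n + 1)) :
    ∃ S : Set ℂ, S.Finite ∧
      ∀ z : ℂ, f z = 0 → z ∉ S → z.im = 0 ∧ deriv f z ≠ 0 := by
  have h1 : 1 < 2 * (2 : ℝ) ^ ((1 : ℝ) / 3) := by
    linarith [Real.one_le_rpow one_le_two (show (0 : ℝ) ≤ 1 / 3 by norm_num)]
  obtain ⟨s, hs, hlim⟩ := exists_lt_one_tendsto_inv_of_le_succ (h1.trans_le hq2) hmono
  exact stmt0_general ha hf hs hlim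
end

section
/- Let f(z) = \sum_{k=0}^\infty a_k z^k, with a_k > 0 for all k, be an entire function such that 3 \le q_2(f) \le q_3(f) \le q_4(f) \le \cdots. Suppose also that condition (*) holds: for every integer j_0 \ge 2 such that q_{j_0}(f) < 4 and q_{j_0+1}(f) \ge 4, either q_{j_0-1}(f)/q_{j_0+1}(f) \ge 0.525 or q_{j_0}(f) \ge 3.4303. Then all complex zeros of f are real (equivalently, f belongs to the Laguerre–Pólya class of type I) if and only if there exists z_0 \in [-a_1/a_2, 0] such that f(z_0) \le 0. -/
/-!
At the negative of the point where the two neighbours of a central Taylor term agree in size, the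
central term outweighs all the others together, because `q_n ≥ 3` and condition (*) make the terms
decay fast enough. Hence the Taylor polynomials, with the top coefficient lowered where
necessary, change sign often enough to have all but two of their zeros real and negative. These
zeros grow geometrically, starting well beyond `-(a 1 / a 2)`, so that the sum of their inverses is
at most `0.9 * (a 2 / a 1)`. This bound survives the passage to the limit: up to factors without
zeros off the real axis and positive on `[-(a 1 / a 2), 0]`, the function `f` is a quadratic
`a 0 + b z + c z ^ 2`. Its zeros are real if and only if `4 * a 0 * c ≤ b ^ 2`, and that is also
the condition for it to be nonpositive somewhere on the interval, which contains `-(2 * a 0 / b)`.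
-/

open Filter Finset Polynomial Topology

theorem secondQuotient_add_two (a : ℕ → ℝ) (j : ℕ) :
    secondQuotient a (j + 2) = a (j + 1) ^ 2 / (a j * a (j + 2)) := rfl

theorem secondQuotient_add_two_of_scaled (a : ℕ → ℝ) {κ x : ℝ} (hκ : κ ≠ 0) (hx : x ≠ 0) (j : ℕ) :
    secondQuotient (fun i ↦ κ * x ^ i * a i) (j + 2) = secondQuotient a (j + 2) := by
  rw [secondQuotient_add_two, secondQuotient_add_two,
    ← mul_div_mul_left (a (j + 1) ^ 2) _ (pow_ne_zero 2 (mul_ne_zero hκ (pow_ne_zero (j + 1) hx)))]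
  ring

theorem secondQuotient_of_balanced {T : ℕ → ℝ} {m : ℕ} (h1 : T (m + 2) = 1)
    (hbal : T (m + 1) = T (m + 3)) : secondQuotient T (m + 3) = 1 / T (m + 3) ^ 2 := by
  rw [secondQuotient_add_two, h1, hbal, one_pow, sq]

/-- The coefficient sequences `b` of the polynomials of degree `n` to which the sign analysis
applies: positive up to `n`, with non-decreasing second quotients that start at `3` or above and
satisfy a polynomial version of condition (*). The last field keeps `q_{m+3} < 4` away from the
top index `n`, where no `q_{m+4}` is available, and does not need `q_{m+4} ≥ 4`, because otherwise
`0.525 * q_{m+4} < 2.1 < q_{m+2}`. -/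
structure IsAdmissible (n : ℕ) (b : ℕ → ℝ) : Prop where
  pos : ∀ {j}, j ≤ n → 0 < b j
  eq_zero : ∀ {j}, n < j → b j = 0
  three_le : 3 ≤ secondQuotient b 2
  secondQuotient_le_succ : ∀ {j}, j + 3 ≤ n → secondQuotient b (j + 2) ≤ secondQuotient b (j + 3)
  gap : ∀ {m}, m + 3 ≤ n → secondQuotient b (m + 3) < 4 → m + 4 ≤ n ∧
    (0.525 * secondQuotient b (m + 4) ≤ secondQuotient b (m + 2) ∨
      3.4303 ≤ secondQuotient b (m + 3))

namespace IsAdmissible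

variable {n : ℕ} {b : ℕ → ℝ}

theorem nonneg (h : IsAdmissible n b) (j : ℕ) : 0 ≤ b j :=
  (le_or_gt j n).elim (fun hj ↦ (h.pos hj).le) fun hj ↦ (h.eq_zero hj).ge

theorem scaled (h : IsAdmissible n b) {κ x : ℝ} (hκ : 0 < κ) (hx : 0 < x) :
    IsAdmissible n fun i ↦ κ * x ^ i * b i := by
  have hq (j : ℕ) := secondQuotient_add_two_of_scaled b hκ.ne' hx.ne' j
  constructor
  · exact fun hj ↦ mul_pos (mul_pos hκ (pow_pos hx _)) (h.pos hj)
  · exact fun hj ↦ by rw [h.eq_zero hj, mul_zero]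
  · exact (hq 0).symm ▸ h.three_le
  · intro j hj
    rw [hq j, hq (j + 1)]
    exact h.secondQuotient_le_succ hj
  · intro m hm
    rw [hq m, hq (m + 1), hq (m + 2)]
    exact h.gap hm

theorem three_le_secondQuotient (h : IsAdmissible n b) {j : ℕ} (hj : j + 2 ≤ n) :
    3 ≤ secondQuotient b (j + 2) := by
  induction j with
  | zero => exact h.three_le
  | succ j ih => exact (ih (by lia)).trans (h.secondQuotient_le_succ hj)

theorem three_mul_le_sq (h : IsAdmissible n b) (j : ℕ) :
    3 * (b j * b (j + 2)) ≤ b (j + 1) ^ 2 := by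
  rcases le_or_gt (j + 2) n with hj | hj
  · rw [← le_div_iff₀ (mul_pos (h.pos (by lia)) (h.pos hj))]
    exact h.three_le_secondQuotient hj
  · rw [h.eq_zero hj, mul_zero, mul_zero]
    positivity

theorem nine_mul_le_mul (h : IsAdmissible n b) (j : ℕ) :
    9 * (b j * b (j + 3)) ≤ b (j + 1) * b (j + 2) := by
  rcases le_or_gt (j + 3) n with hj | hj
  · have h1 : 0 < b (j + 1) := h.pos (by lia)
    have h2 : 0 < b (j + 2) := h.pos (by lia)
    refine le_of_mul_le_mul_left ?_ (mul_pos h1 h2)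
    calc b (j + 1) * b (j + 2) * (9 * (b j * b (j + 3)))
        = 3 * (b j * b (j + 2)) * (3 * (b (j + 1) * b (j + 3))) := by ring
      _ ≤ b (j + 1) ^ 2 * b (j + 2) ^ 2 :=
        mul_le_mul (h.three_mul_le_sq j) (h.three_mul_le_sq (j + 1))
          (mul_nonneg zero_le_three (mul_nonneg h1.le (h.nonneg _))) (sq_nonneg _)
      _ = b (j + 1) * b (j + 2) * (b (j + 1) * b (j + 2)) := by ring
  · rw [h.eq_zero hj, mul_zero, mul_zero]
    exact mul_nonneg (h.nonneg _) (h.nonneg _)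

theorem mul_le_sq (h : IsAdmissible n b) (j : ℕ) : b j * b (j + 2) ≤ b (j + 1) ^ 2 := by
  linarith [h.three_mul_le_sq j, mul_nonneg (h.nonneg j) (h.nonneg (j + 2))]

theorem antitone_add (h : IsAdmissible n b) {k : ℕ} (hk : b (k + 1) ≤ b k) :
    Antitone fun i ↦ b (k + i) := by
  refine antitone_nat_of_succ_le fun i ↦ ?_
  induction i with
  | zero => exact hk
  | succ i ih =>
    rcases le_or_gt (k + i) n with hi | hi
    · refine le_of_mul_le_mul_left ?_ (h.pos hi)
      calc b (k + i) * b (k + i + 2) ≤ b (k + i + 1) ^ 2 := h.mul_le_sq _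
        _ ≤ b (k + i) * b (k + i + 1) :=
          sq (b (k + i + 1)) ▸ mul_le_mul_of_nonneg_right ih (h.nonneg _)
    · rw [h.eq_zero (by lia : n < k + (i + 1 + 1))]
      exact h.nonneg _

theorem antitone_sub (h : IsAdmissible n b) {k : ℕ} (hkn : k < n) (hk : b k ≤ b (k + 1)) :
    Antitone fun i ↦ b (k - i) := by
  have hstep {j : ℕ} (hj : j ≤ k) : b j ≤ b (j + 1) := by
    induction hj using Nat.decreasingInduction with
    | self => exact hk
    | of_succ j hj ih =>
      refine le_of_mul_le_mul_right ?_ (h.pos (by lia : j + 2 ≤ n))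
      calc b j * b (j + 2) ≤ b (j + 1) ^ 2 := h.mul_le_sq j
        _ ≤ b (j + 1) * b (j + 2) :=
          sq (b (j + 1)) ▸ mul_le_mul_of_nonneg_left ih (h.nonneg _)
  refine antitone_nat_of_succ_le fun i ↦ ?_
  rcases lt_or_ge i k with hi | hi
  · simpa only [show k - (i + 1) + 1 = k - i by lia] using hstep (Nat.sub_le k (i + 1))
  · rw [Nat.sub_eq_zero_of_le hi, Nat.sub_eq_zero_of_le (hi.trans i.le_succ)]

end IsAdmissible

theorem alternating_sum_range_succ (u : ℕ → ℝ) (l : ℕ) :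
    ∑ i ∈ range (l + 1), (-1) ^ i * u i = u 0 - ∑ i ∈ range l, (-1) ^ i * u (i + 1) := by
  simp [sum_range_succ', pow_succ, neg_add_eq_sub]

theorem alternating_sum_mem_Icc {u : ℕ → ℝ} (hu : Antitone u) (h0 : ∀ i, 0 ≤ u i) (l : ℕ) :
    ∑ i ∈ range l, (-1) ^ i * u i ∈ Set.Icc 0 (u 0) := by
  induction l generalizing u with
  | zero => simpa using h0 0
  | succ l ih =>
    obtain ⟨hlow, hupp⟩ := ih (hu.comp_monotone (Order.succ_mono)) fun i ↦ h0 (i + 1)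
    have h10 : u 1 ≤ u 0 := hu zero_le_one
    rw [alternating_sum_range_succ]
    exact ⟨sub_nonneg.mpr (hupp.trans h10), sub_le_self _ hlow⟩

theorem sub_le_alternating_sum {u : ℕ → ℝ} (hu : Antitone u) (h0 : ∀ i, 0 ≤ u i) (l : ℕ) :
    u 0 - u 1 ≤ ∑ i ∈ range (l + 1), (-1) ^ i * u i := by
  rw [alternating_sum_range_succ]
  exact sub_le_sub_left
    (alternating_sum_mem_Icc (hu.comp_monotone Order.succ_mono) (fun i ↦ h0 (i + 1)) l).2 _

theorem alternating_sum_eq_center_add_tails (T : ℕ → ℝ) (m l : ℕ) :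
    ∑ j ∈ range (m + 4 + l), (-1) ^ (m + j) * T j =
      T (m + 2) - T (m + 1) - T (m + 3) + ∑ i ∈ range (m + 1), (-1) ^ i * T (m - i) +
        ∑ i ∈ range l, (-1) ^ i * T (m + 4 + i) := by
  have hlow : ∑ j ∈ range (m + 1), (-1) ^ (m + j) * T j =
      ∑ i ∈ range (m + 1), (-1) ^ i * T (m - i) := by
    rw [← sum_range_reflect]
    refine sum_congr rfl fun i hi ↦ ?_
    obtain ⟨d, rfl⟩ := Nat.exists_eq_add_of_le (Nat.lt_succ_iff.mp (mem_range.mp hi))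
    rw [show i + d + 1 - 1 - i = d by lia, Nat.add_sub_cancel_left, add_assoc, pow_add,
      Even.neg_one_pow (Even.add_self d), mul_one]
  have hsign (i : ℕ) : (-1 : ℝ) ^ (m + (m + i)) = (-1) ^ i := by
    rw [← add_assoc, pow_add, Even.neg_one_pow (Even.add_self m), one_mul]
  have hupp : ∑ i ∈ range l, (-1) ^ (m + (m + 4 + i)) * T (m + 4 + i) =
      ∑ i ∈ range l, (-1) ^ i * T (m + 4 + i) :=
    sum_congr rfl fun i _ ↦ by rw [add_assoc m, hsign, pow_add]; norm_num
  rw [sum_range_add, sum_range_succ _ (m + 3), sum_range_succ _ (m + 2), sum_range_succ _ (m + 1),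
    hlow, hupp, hsign, hsign, hsign]
  ring

theorem one_sub_two_mul_add_pos {t t₀ c : ℝ} (ht : 0 ≤ t) (htt₀ : t ≤ t₀) (hc : 0 ≤ c)
    (hct₀ : 2 * c * t₀ ^ 3 ≤ 1) (hpos : 0 < 1 - 2 * t₀ + (1 - t₀ / 9) * (c * t₀ ^ 4)) :
    0 < 1 - 2 * t + (1 - t / 9) * (c * t ^ 4) := by
  have hpow (k : ℕ) : t ^ k ≤ t₀ ^ k := pow_le_pow_left₀ ht htt₀ k
  have hdiff : t₀ ^ 4 - t ^ 4 ≤ (t₀ - t) * (4 * t₀ ^ 3) := by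
    have : t ^ 2 * t₀ ≤ t₀ ^ 2 * t₀ := mul_le_mul_of_nonneg_right (hpow 2) (ht.trans htt₀)
    have : t * t₀ ^ 2 ≤ t₀ * t₀ ^ 2 := mul_le_mul_of_nonneg_right htt₀ (sq_nonneg _)
    calc t₀ ^ 4 - t ^ 4 = (t₀ - t) * (t₀ ^ 3 + t * t₀ ^ 2 + t ^ 2 * t₀ + t ^ 3) := by ring
      _ ≤ (t₀ - t) * (4 * t₀ ^ 3) :=
        mul_le_mul_of_nonneg_left (by linarith [hpow 3]) (sub_nonneg.mpr htt₀)
  have hterm : (1 - t₀ / 9) * (c * t₀ ^ 4) - (1 - t / 9) * (c * t ^ 4) ≤ 2 * (t₀ - t) := by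
    have h5 : 0 ≤ c * (t₀ ^ 5 - t ^ 5) := mul_nonneg hc (sub_nonneg.mpr (hpow 5))
    have h4 : c * (t₀ ^ 4 - t ^ 4) ≤ c * ((t₀ - t) * (4 * t₀ ^ 3)) :=
      mul_le_mul_of_nonneg_left hdiff hc
    have h3 : (t₀ - t) * (2 * c * t₀ ^ 3) ≤ (t₀ - t) * 1 :=
      mul_le_mul_of_nonneg_left hct₀ (sub_nonneg.mpr htt₀)
    linarith
  linarith

namespace IsAdmissible

variable {n m : ℕ} {T : ℕ → ℝ}

theorem lower_tail_ge (h : IsAdmissible n T) (hm : m + 3 ≤ n) (h1 : T (m + 2) = 1)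
    (ht1 : T (m + 1) ≤ 1) :
    (1 - T (m + 1) / 9) * T m ≤ ∑ i ∈ range (m + 1), (-1) ^ i * T (m - i) := by
  cases m with
  | zero =>
    have : 0 ≤ T 1 * T 0 := mul_nonneg (h.nonneg 1) (h.nonneg 0)
    simp only [zero_add, range_one, sum_singleton, pow_zero, one_mul, Nat.sub_zero]
    linarith
  | succ m =>
    have hnine : 9 * T m ≤ T (m + 1) * T (m + 2) := by
      simpa only [h1, mul_one] using h.nine_mul_le_mul m
    have hle : T (m + 1) ≤ T (m + 2) := by
      calc T (m + 1) ≤ T (m + 2) ^ 2 := by simpa only [h1, mul_one] using h.mul_le_sq (m + 1)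
        _ ≤ T (m + 2) := pow_le_of_le_one (h.nonneg _) ht1 two_ne_zero
    calc (1 - T (m + 2) / 9) * T (m + 1) ≤ T (m + 1) - T m := by linarith
      _ ≤ _ := sub_le_alternating_sum (h.antitone_sub (by lia) hle) (fun i ↦ h.nonneg _) _

theorem upper_tail_ge (h : IsAdmissible n T) (h1 : T (m + 2) = 1) (ht1 : T (m + 3) ≤ 1) {l : ℕ}
    (hl : n = m + 3 + l) :
    (1 - T (m + 3) / 9) * T (m + 4) ≤ ∑ i ∈ range l, (-1) ^ i * T (m + 4 + i) := by
  cases l with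
  | zero => simp [h.eq_zero (by lia : n < m + 4)]
  | succ l =>
    have hnine : 9 * T (m + 5) ≤ T (m + 3) * T (m + 4) := by
      simpa only [h1, one_mul] using h.nine_mul_le_mul (m + 2)
    have hle : T (m + 5) ≤ T (m + 4) := by
      linarith [mul_le_of_le_one_left (h.nonneg (m + 4)) ht1, h.nonneg (m + 5)]
    calc (1 - T (m + 3) / 9) * T (m + 4) ≤ T (m + 4) - T (m + 5) := by linarith
      _ ≤ _ := sub_le_alternating_sum (h.antitone_add hle) (fun i ↦ h.nonneg _) _

theorem pow_four_le_of_balanced (h : IsAdmissible n T) (hm : m + 3 ≤ n) (h1 : T (m + 2) = 1)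
    (hbal : T (m + 1) = T (m + 3)) : T (m + 3) ^ 4 ≤ T m := by
  have ht : 0 < T (m + 3) := h.pos hm
  have hq := h.secondQuotient_le_succ hm
  rw [secondQuotient_add_two, secondQuotient_add_two, h1, hbal, mul_one,
    div_le_div_iff₀ (h.pos (by lia)) (mul_pos ht ht)] at hq
  linarith

theorem mul_le_of_balanced (h : IsAdmissible n T) (hm : m + 4 ≤ n) (h1 : T (m + 2) = 1)
    (hbal : T (m + 1) = T (m + 3)) {r : ℝ}
    (hr : r * secondQuotient T (m + 4) ≤ secondQuotient T (m + 2)) : r * T m ≤ T (m + 4) := by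
  have ht : 0 < T (m + 3) := h.pos (by lia)
  rw [secondQuotient_add_two, secondQuotient_add_two, h1, hbal, mul_one, one_mul, ← mul_div_assoc,
    div_le_div_iff₀ (h.pos hm) (h.pos (by lia)), mul_right_comm, mul_comm (_ ^ 2)] at hr
  exact le_of_mul_le_mul_right hr (pow_pos ht 2)

/-- The three pairs `(t₀, c)` correspond to `q_{m+3} ≥ 4`, to `0.525 * q_{m+4} ≤ q_{m+2}` and to
`q_{m+3} ≥ 3.4303`; the two constants of condition (*) are what makes the last inequality hold. -/
theorem exists_sum_bound_of_balanced (h : IsAdmissible n T) (hm : m + 3 ≤ n) (h1 : T (m + 2) = 1)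
    (hbal : T (m + 1) = T (m + 3)) :
    ∃ t₀ c : ℝ, T (m + 3) ≤ t₀ ∧ 0 ≤ c ∧ 2 * c * t₀ ^ 3 ≤ 1 ∧
      c * T (m + 3) ^ 4 ≤ T m + T (m + 4) ∧ 0 < 1 - 2 * t₀ + (1 - t₀ / 9) * (c * t₀ ^ 4) := by
  have hpow := h.pow_four_le_of_balanced hm h1 hbal
  have ht_le {r t₀ : ℝ} (hr : r ≤ secondQuotient T (m + 3)) (ht₀ : 0 ≤ t₀) (hrt : 1 ≤ r * t₀ ^ 2) :
      T (m + 3) ≤ t₀ := by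
    have ht2 : 0 < T (m + 3) ^ 2 := pow_pos (h.pos hm) 2
    rw [secondQuotient_of_balanced h1 hbal, le_div_iff₀ ht2] at hr
    have hr0 : 0 < r := pos_of_mul_pos_left (one_pos.trans_le hrt) (sq_nonneg t₀)
    exact le_of_sq_le_sq (le_of_mul_le_mul_left (hr.trans hrt) hr0) ht₀
  have hsum : 1 * T (m + 3) ^ 4 ≤ T m + T (m + 4) := by linarith [h.nonneg (m + 4)]
  rcases le_or_gt 4 (secondQuotient T (m + 3)) with hq | hq
  · exact ⟨1 / 2, 1, ht_le hq (by norm_num) (by norm_num), by norm_num, by norm_num, hsum,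
      by norm_num⟩
  obtain ⟨hm4, hratio | hq'⟩ := h.gap hm hq
  · have := h.mul_le_of_balanced hm4 h1 hbal hratio
    exact ⟨0.5774, 1.525, ht_le (h.three_le_secondQuotient hm) (by norm_num) (by norm_num),
      by norm_num, by norm_num, by linarith, by norm_num⟩
  · exact ⟨0.53993, 1, ht_le hq' (by norm_num) (by norm_num), by norm_num, by norm_num, hsum,
      by norm_num⟩

theorem alternating_sum_pos (h : IsAdmissible n T) (hm : m + 3 ≤ n) (h1 : T (m + 2) = 1)
    (hbal : T (m + 1) = T (m + 3)) : 0 < ∑ j ∈ range (n + 1), (-1) ^ (m + j) * T j := by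
  have ht : 0 ≤ T (m + 3) := h.nonneg _
  have ht1 : T (m + 3) ≤ 1 := by
    have : 3 * (T (m + 3) * T (m + 3)) ≤ 1 := by
      simpa only [h1, hbal, one_pow] using h.three_mul_le_sq (m + 1)
    nlinarith
  obtain ⟨l, hl⟩ := Nat.exists_eq_add_of_le hm
  have hlow := h.lower_tail_ge hm h1 (hbal ▸ ht1)
  have hupp := h.upper_tail_ge h1 ht1 hl
  obtain ⟨t₀, c, htt₀, hc, hct₀, hsum, hpos⟩ := h.exists_sum_bound_of_balanced hm h1 hbal
  have htails : (1 - T (m + 3) / 9) * (c * T (m + 3) ^ 4) ≤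
      (1 - T (m + 3) / 9) * (T m + T (m + 4)) :=
    mul_le_mul_of_nonneg_left hsum (by linarith)
  have := one_sub_two_mul_add_pos ht htt₀ hc hct₀ hpos
  rw [show n + 1 = m + 4 + l by lia, alternating_sum_eq_center_add_tails, h1, hbal]
  rw [hbal] at hlow
  linarith

end IsAdmissible

/-- The positive point at which the terms of index `m + 1` and `m + 3` of `∑ b j * x ^ j` agree.
At its negative the polynomial has the sign of its central term `b (m + 2) * x ^ (m + 2)`. -/
noncomputable def balancePoint (b : ℕ → ℝ) (m : ℕ) : ℝ := √(b (m + 1) / b (m + 3))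

namespace IsAdmissible

variable {n m : ℕ} {b : ℕ → ℝ}

theorem balancePoint_pos (h : IsAdmissible n b) (hm : m + 3 ≤ n) : 0 < balancePoint b m :=
  Real.sqrt_pos.mpr (div_pos (h.pos (by lia)) (h.pos hm))

theorem balancePoint_sq (h : IsAdmissible n b) : balancePoint b m ^ 2 = b (m + 1) / b (m + 3) :=
  Real.sq_sqrt (div_nonneg (h.nonneg _) (h.nonneg _))

theorem three_mul_balancePoint_le (h : IsAdmissible n b) (hm : m + 4 ≤ n) :
    3 * balancePoint b m ≤ balancePoint b (m + 1) := by
  refine le_of_sq_le_sq ?_ (Real.sqrt_nonneg _)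
  rw [mul_pow, h.balancePoint_sq, h.balancePoint_sq, ← mul_div_assoc,
    div_le_div_iff₀ (h.pos (by lia)) (h.pos hm)]
  linarith [h.nine_mul_le_mul (m + 1)]

theorem three_pow_mul_balancePoint_le (h : IsAdmissible n b) (hm : m + 3 ≤ n) :
    3 ^ m * balancePoint b 0 ≤ balancePoint b m :=
  geom_le zero_le_three m fun _ hk ↦ h.three_mul_balancePoint_le (by lia)

theorem le_balancePoint_zero (h : IsAdmissible n b) (hn : 3 ≤ n) :
    5 / 3 * (b 1 / b 2) ≤ balancePoint b 0 := by
  refine le_of_sq_le_sq ?_ (Real.sqrt_nonneg _)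
  have h2 : 0 < b 2 := h.pos (by lia)
  rw [h.balancePoint_sq, mul_pow, div_pow (b 1), ← mul_div_assoc,
    div_le_div_iff₀ (pow_pos h2 2) (h.pos hn)]
  have : b 1 * (3 * (b 1 * b 3)) ≤ b 1 * b 2 ^ 2 :=
    mul_le_mul_of_nonneg_left (h.three_mul_le_sq 1) (h.nonneg 1)
  linarith [mul_nonneg (h.nonneg 1) (sq_nonneg (b 2))]

theorem sum_inv_balancePoint_le (h : IsAdmissible n b) (hn : m + 2 ≤ n) :
    ∑ k ∈ range m, (balancePoint b k)⁻¹ ≤ 9 / 10 * (b 2 / b 1) := by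
  rcases m.eq_zero_or_pos with rfl | hm
  · simpa using div_nonneg (h.nonneg 2) (h.nonneg 1)
  have h0 : 0 < balancePoint b 0 := h.balancePoint_pos (by lia)
  have hb : 0 < b 1 / b 2 := div_pos (h.pos (by lia)) (h.pos (by lia))
  calc ∑ k ∈ range m, (balancePoint b k)⁻¹
      ≤ ∑ k ∈ range m, (1 / 3) ^ k * (balancePoint b 0)⁻¹ := by
        refine sum_le_sum fun k hk ↦ ?_
        rw [one_div, inv_pow, ← mul_inv]
        exact inv_anti₀ (mul_pos (pow_pos three_pos k) h0)
          (h.three_pow_mul_balancePoint_le (by have := mem_range.mp hk; lia))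
    _ ≤ (1 - 1 / 3)⁻¹ * (balancePoint b 0)⁻¹ := by
        rw [← sum_mul]
        exact mul_le_mul_of_nonneg_right
          (sum_le_hasSum _ (fun k _ ↦ by positivity)
            (hasSum_geometric_of_lt_one (by norm_num) (by norm_num))) (inv_pos.mpr h0).le
    _ ≤ (1 - 1 / 3)⁻¹ * (5 / 3 * (b 1 / b 2))⁻¹ :=
        mul_le_mul_of_nonneg_left
          (inv_anti₀ (mul_pos (by norm_num) hb) (h.le_balancePoint_zero (by lia))) (by norm_num)
    _ = 9 / 10 * (b 2 / b 1) := by rw [mul_inv, inv_div (b 1)]; ring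

theorem eval_neg_balancePoint_pos {P : ℝ[X]} (h : IsAdmissible P.natDegree P.coeff)
    (hm : m + 3 ≤ P.natDegree) : 0 < (-1) ^ m * P.eval (-balancePoint P.coeff m) := by
  set x := balancePoint P.coeff m
  have hx : 0 < x := h.balancePoint_pos hm
  have hκ : 0 < P.coeff (m + 2) * x ^ (m + 2) := mul_pos (h.pos (by lia)) (pow_pos hx _)
  have hbal : P.coeff (m + 1) = P.coeff (m + 3) * x ^ 2 := by
    rw [h.balancePoint_sq, mul_div_cancel₀ _ (h.pos hm).ne']
  have hpos := (h.scaled (inv_pos.mpr hκ) hx).alternating_sum_pos hm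
    (by rw [mul_assoc, mul_comm (x ^ _), inv_mul_cancel₀ hκ.ne']) (by rw [hbal]; ring)
  refine pos_of_mul_pos_right (hpos.trans_eq ?_) (inv_pos.mpr hκ).le
  rw [eval_eq_sum_range, mul_sum, mul_sum]
  refine sum_congr rfl fun j _ ↦ ?_
  rw [neg_pow x, pow_add]
  ring

end IsAdmissible

theorem exists_gt_eval_neg_pos {P : ℝ[X]} (hdeg : 0 < P.natDegree) (hlead : 0 < P.leadingCoeff)
    (x : ℝ) : ∃ y > x, 0 < (-1) ^ P.natDegree * P.eval (-y) := by
  set Q : ℝ[X] := C ((-1) ^ P.natDegree) * P.comp (-X)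
  have hsign : ((-1) ^ P.natDegree : ℝ) ≠ 0 := pow_ne_zero _ (neg_ne_zero.mpr one_ne_zero)
  have hQdeg : 0 < Q.degree := by
    rw [← natDegree_pos_iff_degree_pos, natDegree_C_mul hsign, natDegree_comp, natDegree_neg,
      natDegree_X, mul_one]
    exact hdeg
  have hQlead : Q.leadingCoeff = P.leadingCoeff := by
    rw [leadingCoeff_mul, leadingCoeff_C, leadingCoeff_comp (by simp), leadingCoeff_neg,
      leadingCoeff_X, mul_left_comm, ← mul_pow, neg_mul_neg, one_mul, one_pow, mul_one]
  have hQ := Q.tendsto_atTop_of_leadingCoeff_nonneg hQdeg (hQlead ▸ hlead.le)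
  obtain ⟨y, hxy, hy⟩ := ((eventually_gt_atTop x).and (hQ.eventually_gt_atTop 0)).exists
  exact ⟨y, hxy, by simpa [Q] using hy⟩

theorem exists_mem_Ioo_eval_neg_eq_zero {P : ℝ[X]} {k : ℕ} {x y : ℝ} (hxy : x ≤ y)
    (hx : 0 < (-1) ^ k * P.eval (-x)) (hy : 0 < (-1) ^ (k + 1) * P.eval (-y)) :
    ∃ r ∈ Set.Ioo x y, P.eval (-r) = 0 := by
  have hcont : ContinuousOn (fun r ↦ (-1) ^ k * P.eval (-r)) (Set.Icc x y) := by fun_prop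
  rw [pow_succ, mul_neg_one, neg_mul] at hy
  obtain ⟨r, hr, hr0⟩ := intermediate_value_Ioo' hxy hcont ⟨neg_pos.mp hy, hx⟩
  exact ⟨r, hr, (mul_eq_zero.mp hr0).resolve_left (pow_ne_zero _ (neg_ne_zero.mpr one_ne_zero))⟩

theorem exists_neg_roots_of_alternating_signs {P : ℝ[X]} {m : ℕ} {x : ℕ → ℝ}
    (hdeg : P.natDegree = m + 2) (hlead : 0 < P.leadingCoeff) (hx : StrictMonoOn x (Set.Iio m))
    (hsign : ∀ k < m, 0 < (-1) ^ k * P.eval (-x k)) :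
    ∃ r : ℕ → ℝ, StrictMonoOn r (Set.Iio m) ∧ ∀ k < m, x k < r k ∧ P.eval (-r k) = 0 := by
  have hroot (k : ℕ) (hk : k < m) :
      ∃ r, x k < r ∧ P.eval (-r) = 0 ∧ (∀ l < m, k < l → r < x l) := by
    rcases eq_or_lt_of_le (Nat.succ_le_of_lt hk) with hkm | hkm
    · obtain ⟨y, hxy, hy⟩ := exists_gt_eval_neg_pos (by lia) hlead (x k)
      rw [hdeg, pow_add, neg_one_sq, mul_one, ← hkm] at hy
      obtain ⟨r, hr, hr0⟩ := exists_mem_Ioo_eval_neg_eq_zero hxy.le (hsign k hk) hy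
      exact ⟨r, hr.1, hr0, fun l hl hkl ↦ by lia⟩
    · obtain ⟨r, hr, hr0⟩ := exists_mem_Ioo_eval_neg_eq_zero
        (hx.monotoneOn hk hkm k.le_succ) (hsign k hk) (hsign (k + 1) hkm)
      exact ⟨r, hr.1, hr0, fun l hl hkl ↦ hr.2.trans_le (hx.monotoneOn hkm hl hkl)⟩
  choose! r hxr hr0 hrx using hroot
  exact ⟨r, fun k hk l hl hkl ↦ (hrx k hk l hl hkl).trans (hxr l hl),
    fun k hk ↦ ⟨hxr k hk, hr0 k hk⟩⟩

theorem exists_eq_mul_prod_one_add {K ι : Type*} [Field K] {P : K[X]} {s : Finset ι} {r : ι → K}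
    (hP : P ≠ 0) (hr : ∀ k ∈ s, r k ≠ 0) (hinj : Set.InjOn r s)
    (hroot : ∀ k ∈ s, P.eval (-r k) = 0) :
    ∃ g : K[X], g.natDegree + #s = P.natDegree ∧ P = g * ∏ k ∈ s, (1 + C (r k)⁻¹ * X) := by
  have hdvd {k : ι} (hk : k ∈ s) : 1 + C (r k)⁻¹ * X ∣ X - C (-r k) := by
    refine Dvd.intro_left (C (r k)) ?_
    rw [mul_add, ← mul_assoc, ← C_mul, mul_inv_cancel₀ (hr k hk), C_1, C_neg]
    ring
  have hcop : (s : Set ι).Pairwise (Function.onFun IsCoprime fun k ↦ 1 + C (r k)⁻¹ * X) := by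
    intro k hk l hl hkl
    refine ((isCoprime_X_sub_C_of_isUnit_sub ?_).of_isCoprime_of_dvd_left
      (hdvd hk)).of_isCoprime_of_dvd_right (hdvd hl)
    exact (sub_ne_zero.mpr fun h ↦ hkl (hinj hk hl (neg_injective h))).isUnit
  obtain ⟨g, hg⟩ := prod_dvd_of_coprime hcop fun k hk ↦
    (hdvd hk).trans (dvd_iff_isRoot.mpr (hroot k hk))
  have hfactor (k : ι) (hk : k ∈ s) : (1 + C (r k)⁻¹ * X).natDegree = 1 := by
    rw [add_comm, ← C_1, natDegree_linear (inv_ne_zero (hr k hk))]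
  have hprod : (∏ k ∈ s, (1 + C (r k)⁻¹ * X)).natDegree = #s := by
    rw [natDegree_prod _ _ fun k hk h0 ↦ by simpa [h0] using hfactor k hk, sum_congr rfl hfactor,
      card_eq_sum_ones]
  rw [mul_comm] at hg
  rw [hg] at hP
  exact ⟨g, by rw [hg, natDegree_mul (left_ne_zero_of_mul hP) (right_ne_zero_of_mul hP), hprod], hg⟩

/-- `P` is `g`, of degree at most two, times factors `1 + y k * X` with `y k ≥ 0` and
`∑ y k ≤ Y`. The uniform bound `Y` allows passing to limits of such factorizations. -/
def IsQuadraticCofactor (Y : ℝ) (P g : ℝ[X]) : Prop :=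
  g.natDegree ≤ 2 ∧ ∃ (s : Finset ℕ) (y : ℕ → ℝ), (∀ k ∈ s, 0 ≤ y k) ∧ ∑ k ∈ s, y k ≤ Y ∧
    P = g * ∏ k ∈ s, (1 + C (y k) * X)

theorem IsAdmissible.exists_isQuadraticCofactor {P : ℝ[X]} (h : IsAdmissible P.natDegree P.coeff)
    (hdeg : 2 ≤ P.natDegree) :
    ∃ g, IsQuadraticCofactor (9 / 10 * (P.coeff 2 / P.coeff 1)) P g := by
  obtain ⟨m, hm⟩ := Nat.exists_eq_add_of_le' hdeg
  have hlead : 0 < P.leadingCoeff := h.pos le_rfl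
  have hx0 {k : ℕ} (hk : k < m) : 0 < balancePoint P.coeff k := h.balancePoint_pos (by lia)
  have hx : StrictMonoOn (balancePoint P.coeff) (Set.Iio m) := by
    refine strictMonoOn_of_lt_succ Set.ordConnected_Iio fun k _ hk hk' ↦ ?_
    have : k + 1 < m := hk'
    exact (lt_mul_of_one_lt_left (hx0 hk) (by norm_num)).trans_le
      (h.three_mul_balancePoint_le (by lia))
  obtain ⟨r, hr, hroot⟩ := exists_neg_roots_of_alternating_signs hm hlead hx fun k hk ↦
    h.eval_neg_balancePoint_pos (by lia)
  have hr0 (k : ℕ) (hk : k ∈ range m) : 0 < r k :=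
    (hx0 (mem_range.mp hk)).trans (hroot k (mem_range.mp hk)).1
  obtain ⟨g, hgdeg, hg⟩ := exists_eq_mul_prod_one_add (leadingCoeff_ne_zero.mp hlead.ne')
    (fun k hk ↦ (hr0 k hk).ne') (by simpa using hr.injOn)
    fun k hk ↦ (hroot k (mem_range.mp hk)).2
  rw [card_range] at hgdeg
  refine ⟨g, by lia, range m, fun k ↦ (r k)⁻¹, fun k hk ↦ (inv_pos.mpr (hr0 k hk)).le, ?_, hg⟩
  refine (sum_le_sum fun k hk ↦ ?_).trans (h.sum_inv_balancePoint_le hm.ge)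
  have hk := mem_range.mp hk
  exact inv_anti₀ (hx0 hk) (hroot k hk).1.le

theorem coeff_zero_prod_one_add {R ι : Type*} [CommSemiring R] (s : Finset ι) (y : ι → R) :
    (∏ k ∈ s, (1 + C (y k) * X)).coeff 0 = 1 := by
  simp [coeff_zero_prod]

theorem coeff_one_prod_one_add {R ι : Type*} [CommSemiring R] (s : Finset ι) (y : ι → R) :
    (∏ k ∈ s, (1 + C (y k) * X)).coeff 1 = ∑ k ∈ s, y k := by
  classical
  induction s using Finset.induction_on with
  | empty => simp [coeff_one]
  | insert k s hk ih =>
    rw [prod_insert hk, sum_insert hk, mul_coeff_one, ih, coeff_zero_prod_one_add]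
    simp [coeff_one, add_comm]

theorem norm_one_add_mul_le_exp {t : ℝ} (ht : 0 ≤ t) (z : ℂ) :
    ‖1 + t * z‖ ≤ Real.exp (t * ‖z‖) := by
  calc ‖1 + t * z‖ ≤ ‖(1 : ℂ)‖ + ‖t * z‖ := norm_add_le _ _
    _ = t * ‖z‖ + 1 := by rw [norm_one, norm_mul, Complex.norm_of_nonneg ht, add_comm]
    _ ≤ Real.exp (t * ‖z‖) := Real.add_one_le_exp _

theorem exp_neg_le_norm_one_add_mul {t : ℝ} (ht : 0 ≤ t) {z : ℂ} (hz : z.im ≠ 0) :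
    Real.exp (-(t * (‖z‖ ^ 2 / |z.im|))) ≤ ‖1 + t * z‖ := by
  have him : 0 < |z.im| := abs_pos.mpr hz
  have hconj : |z.im| ≤ ‖z‖ * ‖1 + t * z‖ := by
    have heq : (starRingEnd ℂ) z * (1 + t * z) = (starRingEnd ℂ) z + (t * ‖z‖ ^ 2 : ℝ) := by
      push_cast [← Complex.conj_mul']
      ring
    calc |z.im| = |((starRingEnd ℂ) z * (1 + t * z)).im| := by
          rw [heq, Complex.add_im, Complex.ofReal_im, add_zero, Complex.conj_im, abs_neg]
      _ ≤ ‖(starRingEnd ℂ) z * (1 + t * z)‖ := Complex.abs_im_le_norm _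
      _ = ‖z‖ * ‖1 + t * z‖ := by rw [norm_mul, RCLike.norm_conj]
  have hone : 1 ≤ ‖1 + t * z‖ + t * ‖z‖ := by
    calc (1 : ℝ) = ‖(1 + t * z) - t * z‖ := by rw [add_sub_cancel_right, norm_one]
      _ ≤ ‖1 + t * z‖ + ‖t * z‖ := norm_sub_le _ _
      _ = ‖1 + t * z‖ + t * ‖z‖ := by rw [norm_mul, Complex.norm_of_nonneg ht]
  have hbound : 1 ≤ (t * (‖z‖ ^ 2 / |z.im|) + 1) * ‖1 + t * z‖ := by
    have : t * ‖z‖ ≤ t * (‖z‖ ^ 2 / |z.im|) * ‖1 + t * z‖ := by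
      rw [mul_assoc, div_mul_eq_mul_div, sq, mul_assoc]
      refine mul_le_mul_of_nonneg_left ?_ ht
      rw [le_div_iff₀ him]
      exact mul_le_mul_of_nonneg_left hconj (norm_nonneg z)
    linarith
  rw [Real.exp_neg, inv_le_iff_one_le_mul₀ (Real.exp_pos _), mul_comm]
  exact hbound.trans (mul_le_mul_of_nonneg_right (Real.add_one_le_exp _) (norm_nonneg _))

theorem norm_prod_one_add_mem_Icc {ι : Type*} {s : Finset ι} {y : ι → ℝ} {Y : ℝ}
    (hy : ∀ k ∈ s, 0 ≤ y k) (hY : ∑ k ∈ s, y k ≤ Y) {z : ℂ} (hz : z.im ≠ 0) :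
    ‖∏ k ∈ s, (1 + y k * z)‖ ∈
      Set.Icc (Real.exp (-(Y * (‖z‖ ^ 2 / |z.im|)))) (Real.exp (Y * ‖z‖)) := by
  rw [norm_prod]
  constructor
  · calc Real.exp (-(Y * (‖z‖ ^ 2 / |z.im|)))
        ≤ Real.exp (∑ k ∈ s, -(y k * (‖z‖ ^ 2 / |z.im|))) := by
          rw [sum_neg_distrib, ← sum_mul]
          gcongr
      _ ≤ ∏ k ∈ s, ‖1 + y k * z‖ := by
          rw [Real.exp_sum]
          exact prod_le_prod (fun k _ ↦ (Real.exp_pos _).le)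
            fun k hk ↦ exp_neg_le_norm_one_add_mul (hy k hk) hz
  · calc ∏ k ∈ s, ‖1 + y k * z‖ ≤ Real.exp (∑ k ∈ s, y k * ‖z‖) := by
          rw [Real.exp_sum]
          exact prod_le_prod (fun k _ ↦ norm_nonneg _)
            fun k hk ↦ norm_one_add_mul_le_exp (hy k hk) z
      _ ≤ Real.exp (Y * ‖z‖) := by
          rw [← sum_mul]
          gcongr

theorem prod_one_sub_mem_Icc {ι : Type*} {s : Finset ι} {t : ι → ℝ} (ht : ∀ k ∈ s, 0 ≤ t k)
    (hsum : ∑ k ∈ s, t k ≤ 1) : ∏ k ∈ s, (1 - t k) ∈ Set.Icc (1 - ∑ k ∈ s, t k) 1 := by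
  classical
  induction s using Finset.induction_on with
  | empty => simp
  | insert k s hk ih =>
    rw [sum_insert hk] at hsum
    have htk : 0 ≤ t k := ht k (mem_insert_self k s)
    have hts (l : ι) (hl : l ∈ s) : 0 ≤ t l := ht l (mem_insert_of_mem hl)
    have : 0 ≤ ∑ k ∈ s, t k := sum_nonneg hts
    obtain ⟨hlow, hupp⟩ := ih hts (by linarith)
    rw [prod_insert hk, sum_insert hk]
    constructor
    · nlinarith
    · nlinarith

theorem exists_eq_mul_of_tendsto {M : Type*} [Mul M] [TopologicalSpace M]
    [FirstCountableTopology M] [T2Space M] [ContinuousMul M] {K : Set M} (hK : IsCompact K)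
    {u p : ℕ → M} {u₀ v : M} (hp : ∀ n, p n ∈ K) (hu : Tendsto u atTop (𝓝 u₀))
    (hv : Tendsto (fun n ↦ u n * p n) atTop (𝓝 v)) : ∃ r ∈ K, v = u₀ * r := by
  obtain ⟨r, hr, φ, hφ, hpr⟩ := hK.tendsto_subseq hp
  exact ⟨r, hr, tendsto_nhds_unique (hv.comp hφ.tendsto_atTop)
    ((hu.comp hφ.tendsto_atTop).mul hpr)⟩

namespace IsQuadraticCofactor

variable {Y : ℝ} {P g : ℝ[X]}

theorem coeff_zero (h : IsQuadraticCofactor Y P g) : g.coeff 0 = P.coeff 0 := by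
  obtain ⟨-, s, y, -, -, rfl⟩ := h
  rw [mul_coeff_zero, coeff_zero_prod_one_add, mul_one]

theorem coeff_one_mem_Icc (h : IsQuadraticCofactor Y P g) (h0 : 0 ≤ P.coeff 0) :
    g.coeff 1 ∈ Set.Icc (P.coeff 1 - P.coeff 0 * Y) (P.coeff 1) := by
  have hcoeff := h.coeff_zero
  obtain ⟨-, s, y, hy, hY, hP⟩ := h
  have h1 : P.coeff 1 = P.coeff 0 * ∑ k ∈ s, y k + g.coeff 1 := by
    rw [← hcoeff, hP, mul_coeff_one, coeff_one_prod_one_add, coeff_zero_prod_one_add, mul_one]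
  have hsum : P.coeff 0 * ∑ k ∈ s, y k ≤ P.coeff 0 * Y := mul_le_mul_of_nonneg_left hY h0
  have hsum0 : 0 ≤ P.coeff 0 * ∑ k ∈ s, y k := mul_nonneg h0 (sum_nonneg hy)
  constructor <;> linarith

theorem abs_eval_one_le (h : IsQuadraticCofactor Y P g) : |g.eval 1| ≤ |P.eval 1| := by
  obtain ⟨-, s, y, hy, -, rfl⟩ := h
  have hprod : 1 ≤ ∏ k ∈ s, (1 + y k) :=
    one_le_prod fun k hk ↦ le_add_of_nonneg_right (hy k hk)
  simpa [eval_prod, abs_mul] using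
    le_mul_of_one_le_right (abs_nonneg (g.eval 1)) (hprod.trans (le_abs_self _))

theorem exists_aeval_eq (h : IsQuadraticCofactor Y P g) {z : ℂ} (hz : z.im ≠ 0) :
    ∃ w : ℂ, ‖w‖ ∈ Set.Icc (Real.exp (-(Y * (‖z‖ ^ 2 / |z.im|)))) (Real.exp (Y * ‖z‖)) ∧
      aeval z P = aeval z g * w := by
  obtain ⟨-, s, y, hy, hY, rfl⟩ := h
  exact ⟨_, norm_prod_one_add_mem_Icc hy hY hz, by simp [map_prod]⟩

theorem exists_eval_neg_eq (h : IsQuadraticCofactor Y P g) {x : ℝ} (hx : 0 ≤ x) (hxY : x * Y ≤ 1) :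
    ∃ w ∈ Set.Icc (1 - x * Y) 1, P.eval (-x) = g.eval (-x) * w := by
  obtain ⟨-, s, y, hy, hY, rfl⟩ := h
  have hsum : ∑ k ∈ s, y k * x ≤ x * Y := by
    rw [← sum_mul, mul_comm]
    exact mul_le_mul_of_nonneg_left hY hx
  obtain ⟨hlow, hupp⟩ := prod_one_sub_mem_Icc (fun k hk ↦ mul_nonneg (hy k hk) hx)
    (hsum.trans hxY)
  exact ⟨_, ⟨(sub_le_sub_left hsum 1).trans hlow, hupp⟩, by simp [eval_prod, sub_eq_add_neg]⟩

theorem aeval_eq (h : IsQuadraticCofactor Y P g) (z : ℂ) :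
    aeval z g = g.coeff 0 + g.coeff 1 * z + (g.eval 1 - g.coeff 0 - g.coeff 1) * z ^ 2 := by
  have hdeg : g.natDegree < 3 := Nat.lt_succ_of_le h.1
  rw [aeval_eq_sum_range' hdeg, eval_eq_sum_range' hdeg]
  simp only [sum_range_succ, range_zero, sum_empty, zero_add, pow_zero, one_pow, pow_one, mul_one,
    Complex.real_smul]
  push_cast
  ring

end IsQuadraticCofactor

theorem tendsto_eval_of_tendsto_aeval {P : ℕ → ℝ[X]} {x : ℝ} {w : ℂ}
    (h : Tendsto (fun N ↦ aeval (x : ℂ) (P N)) atTop (𝓝 w)) :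
    Tendsto (fun N ↦ (P N).eval x) atTop (𝓝 w.re) := by
  have hre (N : ℕ) : (aeval (x : ℂ) (P N)).re = (P N).eval x := by
    rw [← Complex.coe_algebraMap, aeval_algebraMap_apply, coe_aeval_eq_eval,
      Complex.coe_algebraMap, Complex.ofReal_re]
  exact ((Complex.continuous_re.tendsto w).comp h).congr hre

theorem exists_subseq_tendsto_quadratic {P g : ℕ → ℝ[X]} {a₀ a₁ Y B : ℝ} (ha₀ : 0 ≤ a₀)
    (h0 : ∀ N, (P N).coeff 0 = a₀) (h1 : ∀ N, (P N).coeff 1 = a₁)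
    (hg : ∀ N, IsQuadraticCofactor Y (P N) (g N)) (hB : ∀ N, |(P N).eval 1| ≤ B) :
    ∃ (φ : ℕ → ℕ) (b c : ℝ), StrictMono φ ∧ a₁ - a₀ * Y ≤ b ∧
      ∀ z : ℂ, Tendsto (fun N ↦ aeval z (g (φ N))) atTop (𝓝 (a₀ + b * z + c * z ^ 2)) := by
  have hcompact := (isCompact_Icc (a := a₁ - a₀ * Y) (b := a₁)).prod
    (isCompact_Icc (a := -B) (b := B))
  have hmem (N : ℕ) : ((g N).coeff 1, (g N).eval 1) ∈
      Set.Icc (a₁ - a₀ * Y) a₁ ×ˢ Set.Icc (-B) B := by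
    refine ⟨?_, abs_le.mp ((hg N).abs_eval_one_le.trans (hB N))⟩
    simpa only [h0, h1] using (hg N).coeff_one_mem_Icc ((h0 N).symm ▸ ha₀)
  obtain ⟨⟨b, u⟩, ⟨⟨hb, -⟩, -⟩, φ, hφ, hlim⟩ := hcompact.tendsto_subseq hmem
  obtain ⟨hb_lim, hu_lim⟩ := Prod.tendsto_iff _ _ |>.mp hlim
  dsimp only [Function.comp_apply] at hb_lim hu_lim
  refine ⟨φ, b, u - a₀ - b, hφ, hb, fun z ↦ ?_⟩
  simp only [(hg _).aeval_eq, (hg _).coeff_zero, h0]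
  push_cast
  exact ((hb_lim.ofReal.mul_const z).const_add _).add
    (((hu_lim.ofReal.sub_const _).sub hb_lim.ofReal).mul_const _)

theorem exists_quadratic_of_tendsto {P g : ℕ → ℝ[X]} {f : ℂ → ℂ} {a₀ a₁ Y : ℝ} (ha₀ : 0 ≤ a₀)
    (h0 : ∀ N, (P N).coeff 0 = a₀) (h1 : ∀ N, (P N).coeff 1 = a₁)
    (hg : ∀ N, IsQuadraticCofactor Y (P N) (g N))
    (hlim : ∀ z : ℂ, Tendsto (fun N ↦ aeval z (P N)) atTop (𝓝 (f z))) :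
    ∃ b c : ℝ, a₁ - a₀ * Y ≤ b ∧
      (∀ z : ℂ, z.im ≠ 0 → (f z = 0 ↔ (a₀ + b * z + c * z ^ 2 : ℂ) = 0)) ∧
      ∀ x : ℝ, x ≤ 0 → -x * Y < 1 → ((f x).re ≤ 0 ↔ a₀ + b * x + c * x ^ 2 ≤ 0) := by
  have hreal (x : ℝ) := tendsto_eval_of_tendsto_aeval (hlim x)
  obtain ⟨B, hB⟩ := (hreal 1).abs.bddAbove_range
  obtain ⟨φ, b, c, hφ, hb, hquad⟩ :=
    exists_subseq_tendsto_quadratic ha₀ h0 h1 hg fun N ↦ hB (Set.mem_range_self N)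
  refine ⟨b, c, hb, fun z hz ↦ ?_, fun x hx hxY ↦ ?_⟩
  · choose w hw hPw using fun N ↦ (hg N).exists_aeval_eq hz
    have hcompact (r R : ℝ) : IsCompact {w : ℂ | ‖w‖ ∈ Set.Icc r R} :=
      (isCompact_closedBall 0 R).of_isClosed_subset (isClosed_Icc.preimage continuous_norm)
        fun w hw ↦ mem_closedBall_zero_iff.mpr hw.2
    obtain ⟨r, hr, hfr⟩ := exists_eq_mul_of_tendsto (hcompact _ _) (fun N ↦ hw (φ N)) (hquad z)
      (by simpa only [Function.comp_def, hPw] using (hlim z).comp hφ.tendsto_atTop)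
    have hr0 : r ≠ 0 := norm_pos_iff.mp ((Real.exp_pos _).trans_le hr.1)
    rw [hfr, mul_eq_zero, or_iff_left hr0]
  · choose w hw hPw using fun N ↦ (hg N).exists_eval_neg_eq (neg_nonneg.mpr hx) hxY.le
    rw [neg_neg] at hPw
    have hquad_real := tendsto_eval_of_tendsto_aeval (hquad x)
    obtain ⟨r, hr, hfr⟩ := exists_eq_mul_of_tendsto isCompact_Icc (fun N ↦ hw (φ N)) hquad_real
      (by simpa only [Function.comp_def, hPw] using (hreal x).comp hφ.tendsto_atTop)
    have hr0 : 0 < r := (sub_pos.mpr hxY).trans_le hr.1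
    rw [hfr, ← not_lt, mul_pos_iff_of_pos_right hr0, not_lt]
    norm_cast

theorem exists_im_ne_zero_of_sq_lt {a b c : ℝ} (ha : 0 < a) (hdisc : b ^ 2 < 4 * a * c) :
    ∃ z : ℂ, a + b * z + c * z ^ 2 = 0 ∧ z.im ≠ 0 := by
  have hc : 0 < c := pos_of_mul_pos_right ((sq_nonneg b).trans_lt hdisc) (by linarith)
  have hcC : (c : ℂ) ≠ 0 := Complex.ofReal_ne_zero.mpr hc.ne'
  set d := √(4 * a * c - b ^ 2)
  have hd : 0 < d := Real.sqrt_pos.mpr (sub_pos.mpr hdisc)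
  have hd_sq : d ^ 2 = 4 * a * c - b ^ 2 := Real.sq_sqrt (sub_nonneg.mpr hdisc.le)
  set w : ℂ := ((-b / (2 * c) : ℝ) : ℂ) + (d / (2 * c) : ℝ) * Complex.I
  have hw : 2 * c * w + b = d * Complex.I := by
    simp only [w]
    push_cast
    field_simp
    ring
  have hdiscrim : discrim (c : ℂ) b a = (2 * c * w + b) ^ 2 := by
    rw [hw, mul_pow, Complex.I_sq, ← Complex.ofReal_pow, hd_sq, discrim]
    push_cast
    ring
  have hroot := (quadratic_eq_zero_iff_discrim_eq_sq hcC w).mpr hdiscrim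
  have hw_im : w.im = d / (2 * c) := by
    simp only [w, Complex.add_im, Complex.ofReal_im, Complex.im_ofReal_mul, Complex.I_im, mul_one,
      zero_add]
  exact ⟨w, by linear_combination hroot, hw_im ▸ (div_pos hd (mul_pos two_pos hc)).ne'⟩

theorem im_eq_zero_of_quadratic_eq_zero {a b c : ℝ} (ha : 0 < a) (hdisc : 4 * a * c ≤ b ^ 2)
    {z : ℂ} (hz : a + b * z + c * z ^ 2 = 0) : z.im = 0 := by
  by_contra him
  have hre_eq : a + b * z.re + c * (z.re ^ 2 - z.im ^ 2) = 0 := by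
    simpa [sq] using congrArg Complex.re hz
  have him_eq : b * z.im + c * (z.re * z.im + z.im * z.re) = 0 := by
    simpa [sq] using congrArg Complex.im hz
  have hb : b = -(2 * c * z.re) := mul_right_cancel₀ him (by linarith)
  have ha_eq : a = c * (z.re ^ 2 + z.im ^ 2) := by
    rw [hb] at hre_eq
    linarith
  have hc : c ≠ 0 := by
    rintro rfl
    linarith
  have : 0 < (c * z.im) ^ 2 := by positivity
  rw [hb, ha_eq] at hdisc
  linarith

theorem quadratic_zeros_real_iff {a b c : ℝ} (ha : 0 < a) :
    (∀ z : ℂ, a + b * z + c * z ^ 2 = 0 → z.im = 0) ↔ 4 * a * c ≤ b ^ 2 := by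
  refine ⟨fun hreal ↦ ?_, fun hdisc z hz ↦ im_eq_zero_of_quadratic_eq_zero ha hdisc hz⟩
  by_contra! hdisc
  obtain ⟨z, hz, him⟩ := exists_im_ne_zero_of_sq_lt ha hdisc
  exact him (hreal z hz)

theorem exists_quadratic_nonpos_iff {a b c A : ℝ} (ha : 0 < a) (hb : 0 < b) (hA : 2 * a ≤ A * b) :
    (∃ x ∈ Set.Icc (-A) 0, a + b * x + c * x ^ 2 ≤ 0) ↔ 4 * a * c ≤ b ^ 2 := by
  constructor
  · rintro ⟨x, -, hx⟩
    by_contra! hdisc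
    have hsq : 4 * a * (a + b * x + c * x ^ 2) =
        (2 * a + b * x) ^ 2 + (4 * a * c - b ^ 2) * x ^ 2 := by ring
    have hx0 : x = 0 := by
      by_contra hx0
      have : 0 < (4 * a * c - b ^ 2) * x ^ 2 := mul_pos (sub_pos.mpr hdisc) (by positivity)
      nlinarith [sq_nonneg (2 * a + b * x)]
    subst hx0
    linarith
  · intro hdisc
    refine ⟨-(2 * a / b), ⟨neg_le_neg ((div_le_iff₀ hb).mpr hA),
      neg_nonpos.mpr (by positivity)⟩, ?_⟩
    have hval : a + b * -(2 * a / b) + c * (-(2 * a / b)) ^ 2 =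
        a / b ^ 2 * (4 * a * c - b ^ 2) := by
      field_simp
      ring
    rw [hval]
    exact mul_nonpos_of_nonneg_of_nonpos (by positivity) (sub_nonpos.mpr hdisc)

theorem zeros_real_iff_of_tendsto {P g : ℕ → ℝ[X]} {f : ℂ → ℂ} {a₀ a₁ Y A : ℝ} (ha₀ : 0 < a₀)
    (h0 : ∀ N, (P N).coeff 0 = a₀) (h1 : ∀ N, (P N).coeff 1 = a₁)
    (hg : ∀ N, IsQuadraticCofactor Y (P N) (g N))
    (hlim : ∀ z : ℂ, Tendsto (fun N ↦ aeval z (P N)) atTop (𝓝 (f z)))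
    (hA : 0 < A) (hY : 0 ≤ Y) (hAY : A * Y < 1) (h2 : 2 * a₀ ≤ A * (a₁ - a₀ * Y)) :
    (∀ z : ℂ, f z = 0 → z.im = 0) ↔ ∃ x : ℝ, x ∈ Set.Icc (-A) 0 ∧ (f x).re ≤ 0 := by
  obtain ⟨b, c, hb, hzero, hnonpos⟩ := exists_quadratic_of_tendsto ha₀.le h0 h1 hg hlim
  have hAb : 2 * a₀ ≤ A * b := h2.trans (mul_le_mul_of_nonneg_left hb hA.le)
  have hb0 : 0 < b := pos_of_mul_pos_right ((mul_pos two_pos ha₀).trans_le hAb) hA.le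
  calc (∀ z : ℂ, f z = 0 → z.im = 0) ↔ ∀ z : ℂ, (a₀ + b * z + c * z ^ 2 : ℂ) = 0 → z.im = 0 :=
        forall_congr' fun z ↦ by
          by_cases hz : z.im = 0
          · simp only [hz, implies_true]
          · rw [hzero z hz]
    _ ↔ 4 * a₀ * c ≤ b ^ 2 := quadratic_zeros_real_iff ha₀
    _ ↔ ∃ x ∈ Set.Icc (-A) 0, a₀ + b * x + c * x ^ 2 ≤ 0 :=
        (exists_quadratic_nonpos_iff ha₀ hb0 hAb).symm
    _ ↔ ∃ x ∈ Set.Icc (-A) 0, (f (x : ℝ)).re ≤ 0 :=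
        exists_congr fun x ↦ and_congr_right fun hx ↦
          (hnonpos x hx.2 ((mul_le_mul_of_nonneg_right (neg_le.mp hx.1) hY).trans_lt hAY)).symm

/-- The Taylor polynomial of degree `N + 2` of `∑ a k * z ^ k`, with its top coefficient lowered
just enough for the last second quotient to be at least `4`. -/
noncomputable def cappedTrunc (a : ℕ → ℝ) (N : ℕ) : ℝ[X] :=
  ∑ j ∈ range (N + 2), monomial j (a j) +
    monomial (N + 2) (min (a (N + 2)) (a (N + 1) ^ 2 / (4 * a N)))

section cappedTrunc

variable {a : ℕ → ℝ} {N : ℕ}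

theorem coeff_cappedTrunc_of_le {j : ℕ} (hj : j ≤ N + 1) : (cappedTrunc a N).coeff j = a j := by
  simp [cappedTrunc, coeff_monomial, show j < N + 2 by lia, show N + 2 ≠ j by lia]

theorem coeff_cappedTrunc_top :
    (cappedTrunc a N).coeff (N + 2) = min (a (N + 2)) (a (N + 1) ^ 2 / (4 * a N)) := by
  simp [cappedTrunc, coeff_monomial]

theorem coeff_cappedTrunc_of_lt {j : ℕ} (hj : N + 2 < j) : (cappedTrunc a N).coeff j = 0 := by
  simp [cappedTrunc, coeff_monomial, show N + 2 ≤ j by lia, show N + 2 ≠ j by lia]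

theorem coeff_cappedTrunc_pos (ha : ∀ k, 0 < a k) {j : ℕ} (hj : j ≤ N + 2) :
    0 < (cappedTrunc a N).coeff j := by
  rcases Nat.le_succ_iff.mp hj with hj | rfl
  · rw [coeff_cappedTrunc_of_le hj]
    exact ha j
  · rw [coeff_cappedTrunc_top]
    exact lt_min (ha _) (div_pos (pow_pos (ha _) 2) (mul_pos four_pos (ha N)))

theorem natDegree_cappedTrunc (ha : ∀ k, 0 < a k) : (cappedTrunc a N).natDegree = N + 2 :=
  natDegree_eq_of_le_of_coeff_ne_zero
    (natDegree_le_iff_coeff_eq_zero.mpr fun _ ↦ coeff_cappedTrunc_of_lt)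
    (coeff_cappedTrunc_pos ha le_rfl).ne'

theorem secondQuotient_cappedTrunc_of_le {j : ℕ} (hj : j + 2 ≤ N + 1) :
    secondQuotient (cappedTrunc a N).coeff (j + 2) = secondQuotient a (j + 2) := by
  simp only [secondQuotient_add_two, coeff_cappedTrunc_of_le hj,
    coeff_cappedTrunc_of_le (by lia : j + 1 ≤ N + 1), coeff_cappedTrunc_of_le (by lia : j ≤ N + 1)]

theorem secondQuotient_cappedTrunc_top (ha : ∀ k, 0 < a k) :
    secondQuotient (cappedTrunc a N).coeff (N + 2) = max 4 (secondQuotient a (N + 2)) := by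
  have h0 := ha N
  have h1 := ha (N + 1)
  have h2 := ha (N + 2)
  have hle : a (N + 2) ≤ a (N + 1) ^ 2 / (4 * a N) ↔ 4 ≤ secondQuotient a (N + 2) := by
    rw [secondQuotient_add_two, le_div_iff₀ (by positivity), le_div_iff₀ (by positivity)]
    ring_nf
  rw [secondQuotient_add_two, coeff_cappedTrunc_top, coeff_cappedTrunc_of_le le_rfl,
    coeff_cappedTrunc_of_le N.le_succ]
  rcases le_or_gt 4 (secondQuotient a (N + 2)) with h | h
  · rw [max_eq_right h, min_eq_left (hle.mpr h), secondQuotient_add_two]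
  · rw [max_eq_left h.le, min_eq_right (le_of_not_ge (hle.not.mpr h.not_ge))]
    field_simp

theorem secondQuotient_cappedTrunc_mem_Icc (ha : ∀ k, 0 < a k) {j : ℕ} (hj : j ≤ N) :
    secondQuotient (cappedTrunc a N).coeff (j + 2) ∈
      Set.Icc (secondQuotient a (j + 2)) (max 4 (secondQuotient a (j + 2))) := by
  rcases hj.eq_or_lt with rfl | hj
  · rw [secondQuotient_cappedTrunc_top ha]
    exact ⟨le_max_right _ _, le_rfl⟩
  · rw [secondQuotient_cappedTrunc_of_le (by lia)]
    exact ⟨le_rfl, le_max_right _ _⟩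

theorem isAdmissible_cappedTrunc (ha : ∀ k, 0 < a k) (hq2 : 3 ≤ secondQuotient a 2)
    (hmono : ∀ n : ℕ, 2 ≤ n → secondQuotient a n ≤ secondQuotient a (n + 1))
    (hstar : ∀ j0 : ℕ, 3 ≤ j0 → secondQuotient a j0 < 4 → 4 ≤ secondQuotient a (j0 + 1) →
      (0.525 : ℝ) ≤ secondQuotient a (j0 - 1) / secondQuotient a (j0 + 1) ∨
        (3.4303 : ℝ) ≤ secondQuotient a j0) :
    IsAdmissible (N + 2) (cappedTrunc a N).coeff where
  pos := coeff_cappedTrunc_pos ha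
  eq_zero := coeff_cappedTrunc_of_lt
  three_le := hq2.trans (secondQuotient_cappedTrunc_mem_Icc ha N.zero_le).1
  secondQuotient_le_succ {j} hj := by
    rw [secondQuotient_cappedTrunc_of_le (by lia)]
    exact (hmono (j + 2) (by lia)).trans
      (secondQuotient_cappedTrunc_mem_Icc ha (by lia : j + 1 ≤ N)).1
  gap {m} hm hlt := by
    have hmN : m + 1 ≠ N := by
      rintro rfl
      rw [secondQuotient_cappedTrunc_top ha] at hlt
      exact hlt.not_ge (le_max_left _ _)
    refine ⟨by lia, ?_⟩
    have hle := (secondQuotient_cappedTrunc_mem_Icc ha (by lia : m + 2 ≤ N)).2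
    rw [secondQuotient_cappedTrunc_of_le (by lia : m + 1 + 2 ≤ N + 1)] at hlt ⊢
    rw [secondQuotient_cappedTrunc_of_le (by lia : m + 2 ≤ N + 1)]
    rcases lt_or_ge (secondQuotient a (m + 4)) 4 with h4 | h4
    · have h3 : 3 ≤ secondQuotient a (m + 2) :=
        hq2.trans (Nat.rel_of_forall_rel_succ_of_le_of_le (· ≤ ·) hmono le_rfl (by lia))
      rw [max_eq_left h4.le] at hle
      left
      linarith
    · rw [max_eq_right h4] at hle
      refine (hstar (m + 3) (by lia) hlt h4).imp_left fun hratio ↦ ?_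
      rw [le_div_iff₀ (by linarith)] at hratio
      exact (mul_le_mul_of_nonneg_left hle (by norm_num)).trans hratio

theorem tendsto_aeval_cappedTrunc (ha : ∀ k, 0 < a k) {z w : ℂ}
    (hw : HasSum (fun k ↦ (a k : ℂ) * z ^ k) w) :
    Tendsto (fun N ↦ aeval z (cappedTrunc a N)) atTop (𝓝 w) := by
  have hsum : Tendsto (fun N ↦ ∑ j ∈ range (N + 2), (a j : ℂ) * z ^ j) atTop (𝓝 w) :=
    (tendsto_add_atTop_iff_nat 2).mpr hw.tendsto_sum_nat
  have hterm : Tendsto (fun N ↦ ‖(a (N + 2) : ℂ) * z ^ (N + 2)‖) atTop (𝓝 0) :=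
    tendsto_zero_iff_norm_tendsto_zero.mp
      ((tendsto_add_atTop_iff_nat 2).mpr hw.summable.tendsto_atTop_zero)
  have htop : Tendsto (fun N ↦ ((cappedTrunc a N).coeff (N + 2) : ℂ) * z ^ (N + 2)) atTop
      (𝓝 0) := by
    refine squeeze_zero_norm (fun N ↦ ?_) hterm
    rw [norm_mul, norm_mul, Complex.norm_of_nonneg (coeff_cappedTrunc_pos ha le_rfl).le,
      Complex.norm_of_nonneg (ha _).le, coeff_cappedTrunc_top]
    exact mul_le_mul_of_nonneg_right (min_le_left _ _) (norm_nonneg _)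
  refine (add_zero w ▸ hsum.add htop).congr fun N ↦ ?_
  rw [coeff_cappedTrunc_top]
  simp [cappedTrunc, aeval_monomial]

end cappedTrunc

theorem stmt1_general (a : ℕ → ℝ) (f : ℂ → ℂ)
    (ha : ∀ k, 0 < a k)
    (hf : ∀ z : ℂ, HasSum (fun k : ℕ => (a k : ℂ) * z ^ k) (f z))
    (hq2 : 3 ≤ secondQuotient a 2)
    (hmono : ∀ n : ℕ, 2 ≤ n → secondQuotient a n ≤ secondQuotient a (n + 1))
    (hstar : ∀ j0 : ℕ, 3 ≤ j0 → secondQuotient a j0 < 4 → 4 ≤ secondQuotient a (j0 + 1) →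
      (0.525 : ℝ) ≤ secondQuotient a (j0 - 1) / secondQuotient a (j0 + 1) ∨
        (3.4303 : ℝ) ≤ secondQuotient a j0) :
    (∀ z : ℂ, f z = 0 → z.im = 0) ↔
      ∃ x : ℝ, x ∈ Set.Icc (-(a 1 / a 2)) 0 ∧ (f (x : ℂ)).re ≤ 0 := by
  have hcofactor (N : ℕ) :
      ∃ g, IsQuadraticCofactor (9 / 10 * (a 2 / a 1)) (cappedTrunc a (N + 1)) g := by
    have hP := isAdmissible_cappedTrunc ha hq2 hmono hstar (N := N + 1)
    have hdeg := natDegree_cappedTrunc ha (N := N + 1)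
    have hg := (hdeg.symm ▸ hP).exists_isQuadraticCofactor (by lia)
    rwa [coeff_cappedTrunc_of_le (by lia), coeff_cappedTrunc_of_le (by lia)] at hg
  choose g hg using hcofactor
  have ha1 := ha 1
  have ha2 := ha 2
  have hthree : 3 * (a 0 * a 2) ≤ a 1 ^ 2 := by
    rwa [secondQuotient_add_two, le_div_iff₀ (mul_pos (ha 0) ha2)] at hq2
  refine zeros_real_iff_of_tendsto (ha 0) (fun _ ↦ coeff_cappedTrunc_of_le (by lia))
    (fun _ ↦ coeff_cappedTrunc_of_le (by lia)) hg
    (fun z ↦ (tendsto_add_atTop_iff_nat 1).mpr (tendsto_aeval_cappedTrunc ha (hf z)))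
    (div_pos ha1 ha2) (by positivity) (by field_simp; norm_num) ?_
  calc 2 * a 0 ≤ a 1 ^ 2 / a 2 - 9 / 10 * a 0 := by
        rw [le_sub_iff_add_le, le_div_iff₀ ha2]
        linarith [mul_pos (ha 0) ha2]
    _ = a 1 / a 2 * (a 1 - a 0 * (9 / 10 * (a 2 / a 1))) := by field_simp

theorem stmt1 (a : ℕ → ℝ) (f : ℂ → ℂ)
    (ha : ∀ k, 0 < a k)
    (hf : ∀ z : ℂ, HasSum (fun k : ℕ => (a k : ℂ) * z ^ k) (f z))
    (hq2 : 3 ≤ secondQuotient a 2)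
    (hmono : ∀ n : ℕ, 2 ≤ n → secondQuotient a n ≤ secondQuotient a (n + 1))
    (hstar : ∀ j0 : ℕ, 2 ≤ j0 → secondQuotient a j0 < 4 → 4 ≤ secondQuotient a (j0 + 1) →
      (0.525 : ℝ) ≤ secondQuotient a (j0 - 1) / secondQuotient a (j0 + 1) ∨
        (3.4303 : ℝ) ≤ secondQuotient a j0) :
    (∀ z : ℂ, f z = 0 → z.im = 0) ↔
      ∃ x : ℝ, x ∈ Set.Icc (-(a 1 / a 2)) 0 ∧ (f (x : ℂ)).re ≤ 0 :=
  stmt1_general a f ha hf hq2 hmono fun j hj ↦ hstar j (by lia)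
end

section
/- Let f(z) = \sum_{k=0}^\infty a_k z^k, with a_k > 0 for all k, be an entire function with q_2(f) \le q_3(f), and suppose f belongs to the Laguerre–Pólya class; that is, f(z) = c z^n e^{-\alpha z^2 + \beta z} \prod_k (1 - z/x_k) e^{z/x_k} for some c, \beta \in \mathbb{R}, \alpha \ge 0, nonzero reals x_k with \sum_k x_k^{-2} < \infty, and nonnegative integer n (here n = 0 since a_0 > 0). Then there exists z_0 \in [-a_1/a_2, 0] such that f(z_0) \le 0. -/
/-!
Evaluating at `0` and using that `f ≥ f 0 > 0` on `[0, ∞)`, the Laguerre–Pólya factorization becomes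
`f x = a₀ * exp (-α x² + β x) * ∏ (1 + t i * x) * exp (-(t i * x))` with all `t i > 0`, where
`-1 / t i` are the zeros. Since `f` is bounded below on the positive axis while each factor
`(1 + t i * x) * exp (-(t i * x))` is at most `1`, comparing growth rates forces `α = 0` and
`∑ t i ≤ β`. Taking logarithms yields Newton's identities between `a₁, a₂, a₃` and `β`,
`p₂ = ∑ (t i)²`, `p₃ = ∑ (t i)³`. By Cauchy–Schwarz `p₂² ≤ β * p₃`, which turns `q₂ ≤ q₃` into
`(a₁² - a₀ a₂) * (a₁² - 3 a₀ a₂) ≥ 0`, hence `3 a₀ a₂ ≤ a₁²`, that is,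
`p₂ ≥ (a₂ / a₁) * β ≥ (a₂ / a₁) * ∑ t i`. So some `t i` is at least `a₂ / a₁`, and its zero
`-1 / t i` lies in `[-a₁ / a₂, 0)`.
-/

open Filter Topology Finset

section PowerSeries

variable {𝕜 : Type*} [NontriviallyNormedField 𝕜] {a b : ℕ → 𝕜} {f g : 𝕜 → 𝕜}

lemma hasFPowerSeriesAt_ofScalars_of_hasSum
    (hf : ∀ᶠ z in 𝓝 0, HasSum (fun n => a n * z ^ n) (f z)) :
    HasFPowerSeriesAt f (.ofScalars 𝕜 a) 0 := by
  simpa only [hasFPowerSeriesAt_iff, FormalMultilinearSeries.coeff_ofScalars, smul_eq_mul,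
    mul_comm, zero_add] using hf

variable [CompleteSpace 𝕜] [CharZero 𝕜]

lemma iteratedDeriv_zero_of_hasSum
    (hf : ∀ᶠ z in 𝓝 0, HasSum (fun n => a n * z ^ n) (f z)) (n : ℕ) :
    iteratedDeriv n f 0 = n.factorial * a n := by
  have hp := hasFPowerSeriesAt_ofScalars_of_hasSum hf
  have hcoeff := congrArg (·.coeff n)
    (hp.eq_formalMultilinearSeries hp.analyticAt.hasFPowerSeriesAt)
  simp only [FormalMultilinearSeries.coeff_ofScalars] at hcoeff
  rw [hcoeff, mul_div_cancel₀ _ (Nat.cast_ne_zero.2 n.factorial_ne_zero)]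

lemma succ_mul_coeff_succ_of_deriv_eq_mul
    (hf : ∀ᶠ z in 𝓝 0, HasSum (fun n => a n * z ^ n) (f z))
    (hg : ∀ᶠ z in 𝓝 0, HasSum (fun n => b n * z ^ n) (g z))
    (hfg : deriv f =ᶠ[𝓝 0] f * deriv g) (n : ℕ) :
    (n + 1) * a (n + 1) = ∑ i ∈ range (n + 1), a i * ((n - i + 1 : ℕ) * b (n - i + 1)) := by
  have hfa := (hasFPowerSeriesAt_ofScalars_of_hasSum hf).analyticAt
  have hga := (hasFPowerSeriesAt_ofScalars_of_hasSum hg).analyticAt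
  have hleibniz := hfg.iteratedDeriv_eq n
  rw [← iteratedDeriv_succ', iteratedDeriv_mul hfa.contDiffAt hga.deriv.contDiffAt,
    iteratedDeriv_zero_of_hasSum hf] at hleibniz
  refine mul_left_cancel₀ (Nat.cast_ne_zero.2 n.factorial_ne_zero) ?_
  calc (n.factorial : 𝕜) * ((n + 1) * a (n + 1))
      = (n + 1).factorial * a (n + 1) := by push_cast [Nat.factorial_succ]; ring
    _ = _ := hleibniz
    _ = _ := by
      rw [mul_sum]
      refine sum_congr rfl fun i hi => ?_
      rw [← iteratedDeriv_succ', iteratedDeriv_zero_of_hasSum hf, iteratedDeriv_zero_of_hasSum hg,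
        ← Nat.choose_mul_factorial_mul_factorial (Nat.lt_succ_iff.1 (mem_range.1 hi)),
        Nat.factorial_succ (n - i)]
      push_cast
      ring

end PowerSeries

lemma succ_mul_coeff_succ_of_eq_const_mul_exp {a b : ℕ → ℝ} {f g : ℝ → ℝ} {c : ℝ}
    (hf : ∀ᶠ x in 𝓝 0, HasSum (fun n => a n * x ^ n) (f x))
    (hg : ∀ᶠ x in 𝓝 0, HasSum (fun n => b n * x ^ n) (g x))
    (hfg : f =ᶠ[𝓝 0] fun x => c * Real.exp (g x)) (n : ℕ) :
    (n + 1) * a (n + 1) = ∑ i ∈ range (n + 1), a i * ((n - i + 1 : ℕ) * b (n - i + 1)) := by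
  refine succ_mul_coeff_succ_of_deriv_eq_mul hf hg ?_ n
  have hga := (hasFPowerSeriesAt_ofScalars_of_hasSum hg).analyticAt
  filter_upwards [hga.eventually_analyticAt, hfg, hfg.deriv] with x hgx hfx hf'x
  rw [hf'x, Pi.mul_apply, hfx, mul_assoc]
  exact (hgx.differentiableAt.hasDerivAt.exp.const_mul c).deriv

section Product

variable {ι : Type*} {t : ι → ℝ}

lemma hasSum_log_one_add_sub_self {y : ℝ} (hy : |y| < 1) :
    HasSum (fun k : ℕ => (-1) ^ (k + 1) / (k + 2) * y ^ (k + 2)) (Real.log (1 + y) - y) := by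
  have hlog := (Real.hasSum_pow_div_log_of_abs_lt_one (abs_neg y ▸ hy)).neg
  rw [← hasSum_nat_add_iff' 1] at hlog
  convert! hlog using 1
  · funext k
    rw [show k + 1 + 1 = k + 2 from rfl, neg_pow y (k + 2)]
    push_cast
    ring
  · simp

lemma summable_log_taylor_terms {x r : ℝ} (ht : Summable fun i => t i ^ 2) (hr : r < 1)
    (hxt : ∀ i, |x * t i| ≤ r) :
    Summable fun q : ι × ℕ => (-1 : ℝ) ^ (q.2 + 1) / (q.2 + 2) * (x * t q.1) ^ (q.2 + 2) := by
  rcases isEmpty_or_nonempty ι with _ | ⟨⟨i₀⟩⟩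
  · exact (hasSum_empty).summable
  have hr0 : 0 ≤ r := (abs_nonneg _).trans (hxt i₀)
  refine Summable.of_norm_bounded (g := fun q : ι × ℕ => x ^ 2 * t q.1 ^ 2 * r ^ q.2)
    ((ht.mul_left _).mul_of_nonneg (summable_geometric_of_lt_one hr0 hr)
      (fun i => by positivity) fun k => by positivity) fun ⟨i, k⟩ => ?_
  have hcoeff : |(-1 : ℝ) ^ (k + 1) / (k + 2)| ≤ 1 := by
    rw [abs_div, abs_pow, abs_neg, abs_one, one_pow, abs_of_pos (by positivity)]
    exact div_le_one_of_le₀ (by linarith [(k.cast_nonneg : (0 : ℝ) ≤ k)]) (by positivity)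
  calc ‖(-1 : ℝ) ^ (k + 1) / (k + 2) * (x * t i) ^ (k + 2)‖
      = |(-1 : ℝ) ^ (k + 1) / (k + 2)| * (|x * t i| ^ k * (x * t i) ^ 2) := by
        rw [Real.norm_eq_abs, abs_mul, abs_pow, pow_add |x * t i|, sq_abs]
    _ ≤ 1 * (r ^ k * (x * t i) ^ 2) := by gcongr; exact hxt i
    _ = x ^ 2 * t i ^ 2 * r ^ k := by ring

/-- The Taylor coefficients at `0` of
`x ↦ β * x + ∑ i, (log (1 + x * t i) - x * t i)`, the logarithm of the canonical product
`exp (β * x) * ∏ i, (1 + x * t i) * exp (-(x * t i))`. -/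
noncomputable def logProductCoeff (β : ℝ) (t : ι → ℝ) : ℕ → ℝ
  | 0 => 0
  | 1 => β
  | k + 2 => (-1) ^ (k + 1) / (k + 2) * ∑' i, t i ^ (k + 2)

lemma exists_hasSum_logProductCoeff_and_hasProd {x r : ℝ} (ht : Summable fun i => t i ^ 2)
    (hr : r < 1) (hxt : ∀ i, |x * t i| ≤ r) (β : ℝ) :
    ∃ S, HasSum (fun k => logProductCoeff β t k * x ^ k) S ∧
      HasProd (fun i => (1 + x * t i) * Real.exp (-(x * t i))) (Real.exp (S - β * x)) := by
  obtain ⟨S, hS⟩ := summable_log_taylor_terms ht hr hxt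
  refine ⟨S + β * x, ?_, ?_⟩
  · have hS' := (Equiv.prodComm ℕ ι).hasSum_iff.2 hS
    have hcol := hS'.prod_fiberwise fun k => (hS'.summable.prod_factor k).hasSum
    rw [← hasSum_nat_add_iff' 2]
    convert! hcol using 1
    · funext k
      simp only [Function.comp_apply, Equiv.prodComm_apply, Prod.swap_prod_mk, mul_pow,
        tsum_mul_left, logProductCoeff]
      ring
    · simp [sum_range_succ, logProductCoeff]
  · have hlt : ∀ i, |x * t i| < 1 := fun i => (hxt i).trans_lt hr
    have hpos : ∀ i, 0 < 1 + x * t i := fun i => by linarith [(abs_lt.1 (hlt i)).1]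
    rw [add_sub_cancel_right]
    refine Real.hasProd_of_hasSum_log (fun i => mul_pos (hpos i) (Real.exp_pos _)) ?_
    have hrow : HasSum (fun i => Real.log (1 + x * t i) - x * t i) S :=
      hS.prod_fiberwise fun i => by simpa only using hasSum_log_one_add_sub_self (hlt i)
    refine hrow.congr_fun fun i => ?_
    rw [Real.log_mul (hpos i).ne' (Real.exp_ne_zero _), Real.log_exp, sub_eq_add_neg]

lemma eventually_exists_hasSum_logProductCoeff_and_hasProd (ht : Summable fun i => t i ^ 2)
    (β : ℝ) :
    ∀ᶠ x in 𝓝 0, ∃ S, HasSum (fun k => logProductCoeff β t k * x ^ k) S ∧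
      HasProd (fun i => (1 + x * t i) * Real.exp (-(x * t i))) (Real.exp (S - β * x)) := by
  set B := √(∑' i, t i ^ 2)
  have hB : ∀ i, |t i| ≤ B := fun i =>
    Real.abs_le_sqrt (ht.le_tsum i fun j _ => sq_nonneg (t j))
  have hsmall : ∀ᶠ x : ℝ in 𝓝 0, |x| * B < 1 :=
    (continuous_abs.mul continuous_const).continuousAt.eventually_lt continuousAt_const (by simp)
  filter_upwards [hsmall] with x hx
  refine exists_hasSum_logProductCoeff_and_hasProd ht hx (fun i => ?_) β
  rw [abs_mul]
  exact mul_le_mul_of_nonneg_left (hB i) (abs_nonneg x)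

theorem succ_mul_coeff_succ_of_hasProd {a : ℕ → ℝ} {F : ℝ → ℝ} {β : ℝ} (ha₀ : a 0 ≠ 0)
    (ht : Summable fun i => t i ^ 2)
    (hF : ∀ᶠ x in 𝓝 0, HasSum (fun k => a k * x ^ k) (F x))
    (hprod : ∀ᶠ x in 𝓝 0, HasProd (fun i => (1 + x * t i) * Real.exp (-(x * t i)))
      (F x / a 0 * Real.exp (-(β * x)))) (n : ℕ) :
    (n + 1) * a (n + 1) =
      ∑ i ∈ range (n + 1), a i * ((n - i + 1 : ℕ) * logProductCoeff β t (n - i + 1)) := by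
  have hlog := eventually_exists_hasSum_logProductCoeff_and_hasProd ht β
  refine succ_mul_coeff_succ_of_eq_const_mul_exp (c := a 0)
    (g := fun x => ∑' k, logProductCoeff β t k * x ^ k) hF ?_ ?_ n
  · filter_upwards [hlog] with x ⟨S, hS, _⟩ using hS.summable.hasSum
  · filter_upwards [hlog, hprod] with x ⟨S, hS, hSprod⟩ hFprod
    have heq := hFprod.unique hSprod
    rw [sub_eq_add_neg, Real.exp_add] at heq
    rw [hS.tsum_eq, ← mul_right_cancel₀ (Real.exp_ne_zero _) heq, mul_div_cancel₀ _ ha₀]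

lemma newton_identities {a : ℕ → ℝ} {F : ℝ → ℝ} {β : ℝ} (ha₀ : a 0 ≠ 0)
    (ht : Summable fun i => t i ^ 2)
    (hF : ∀ᶠ x in 𝓝 0, HasSum (fun k => a k * x ^ k) (F x))
    (hprod : ∀ᶠ x in 𝓝 0, HasProd (fun i => (1 + x * t i) * Real.exp (-(x * t i)))
      (F x / a 0 * Real.exp (-(β * x)))) :
    a 1 = a 0 * β ∧ 2 * a 2 = a 1 * β - a 0 * ∑' i, t i ^ 2 ∧
      3 * a 3 = a 2 * β - a 1 * ∑' i, t i ^ 2 + a 0 * ∑' i, t i ^ 3 := by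
  have newton := succ_mul_coeff_succ_of_hasProd ha₀ ht hF hprod
  have h₁ : a 1 = a 0 * β := by
    simpa [logProductCoeff] using newton 0
  have h₂ : (1 + 1) * a 2 = a 0 * ((1 + 1) * (-1 / 2 * ∑' i, t i ^ 2)) + a 1 * β := by
    simpa [sum_range_succ, logProductCoeff] using newton 1
  have h₃ : (2 + 1) * a 3 = a 0 * ((2 + 1) * (1 / (1 + 2) * ∑' i, t i ^ 3)) +
      a 1 * ((1 + 1) * (-1 / 2 * ∑' i, t i ^ 2)) + a 2 * β := by
    simpa [sum_range_succ, logProductCoeff] using newton 2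
  exact ⟨h₁, by linarith, by linarith⟩

lemma tendsto_log_one_add_mul_div_atTop {c : ℝ} (hc : 0 < c) :
    Tendsto (fun x => Real.log (1 + x * c) / x) atTop (𝓝 0) := by
  have htop : Tendsto (fun x => 1 + x * c) atTop atTop :=
    tendsto_atTop_add_const_left _ _ (tendsto_id.atTop_mul_const hc)
  refine ((Real.tendsto_pow_log_div_mul_add_atTop c⁻¹ (-c⁻¹) 1 (inv_ne_zero hc.ne')).comp
    htop).congr fun x => ?_
  rw [Function.comp_apply, pow_one]
  congr 1
  field_simp
  ring

lemma le_prod_of_hasProd_of_le_one {f : ι → ℝ} {p : ℝ} (hf0 : ∀ i, 0 ≤ f i)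
    (hf1 : ∀ i, f i ≤ 1) (hf : HasProd f p) (s : Finset ι) : p ≤ ∏ i ∈ s, f i :=
  le_of_tendsto hf ((eventually_ge_atTop s).mono fun _ hsu => prod_anti_set_of_le_one hf0 hf1 hsu)

section Growth

variable {α β : ℝ} {P : ℝ → ℝ}

lemma mul_add_sum_le_of_exp_le_hasProd (ht : ∀ i, 0 ≤ t i)
    (hP : ∀ x > 0, HasProd (fun i => (1 + x * t i) * Real.exp (-(x * t i))) (P x))
    (hle : ∀ x > 0, Real.exp (α * x ^ 2 - β * x) ≤ P x) (s : Finset ι) {x : ℝ} (hx : 0 < x) :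
    α * x + ∑ i ∈ s, t i ≤ β + ∑ i ∈ s, Real.log (1 + x * t i) / x := by
  have hxt : ∀ i, 0 ≤ x * t i := fun i => mul_nonneg hx.le (ht i)
  have hpos : ∀ i, 0 < 1 + x * t i := fun i => by linarith [hxt i]
  have hpart : P x ≤ ∏ i ∈ s, (1 + x * t i) * Real.exp (-(x * t i)) :=
    le_prod_of_hasProd_of_le_one (fun i => mul_nonneg (hpos i).le (Real.exp_pos _).le)
      (fun i => by
        rw [Real.exp_neg, ← div_eq_mul_inv, div_le_one (Real.exp_pos _), add_comm]
        exact Real.add_one_le_exp _) (hP x hx) s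
  have hlog : α * x ^ 2 - β * x ≤ ∑ i ∈ s, (Real.log (1 + x * t i) - x * t i) := by
    rw [← Real.exp_le_exp, Real.exp_sum]
    simpa only [sub_eq_add_neg, Real.exp_add, Real.exp_log (hpos _)] using (hle x hx).trans hpart
  rw [sum_sub_distrib, ← mul_sum] at hlog
  rw [← sum_div, ← sub_le_iff_le_add', le_div_iff₀ hx]
  linarith

lemma eq_zero_of_exp_le_hasProd (hα : 0 ≤ α) (ht : ∀ i, 0 ≤ t i)
    (hP : ∀ x > 0, HasProd (fun i => (1 + x * t i) * Real.exp (-(x * t i))) (P x))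
    (hle : ∀ x > 0, Real.exp (α * x ^ 2 - β * x) ≤ P x) : α = 0 := by
  by_contra hne
  have : 0 < α := hα.lt_of_ne' hne
  have hbound := mul_add_sum_le_of_exp_le_hasProd ht hP hle ∅ (x := (|β| + 1) / α) (by positivity)
  rw [sum_empty, sum_empty, add_zero, add_zero, mul_div_cancel₀ _ hne] at hbound
  linarith [le_abs_self β]

lemma sum_le_of_exp_le_hasProd (hα : 0 ≤ α) (ht : ∀ i, 0 < t i)
    (hP : ∀ x > 0, HasProd (fun i => (1 + x * t i) * Real.exp (-(x * t i))) (P x))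
    (hle : ∀ x > 0, Real.exp (α * x ^ 2 - β * x) ≤ P x) (s : Finset ι) : ∑ i ∈ s, t i ≤ β := by
  have hlim : Tendsto (fun x => β + ∑ i ∈ s, Real.log (1 + x * t i) / x) atTop (𝓝 β) := by
    simpa using tendsto_const_nhds.add
      (tendsto_finsetSum s fun i _ => tendsto_log_one_add_mul_div_atTop (ht i))
  refine ge_of_tendsto hlim ?_
  filter_upwards [eventually_gt_atTop 0] with x hx
  have hbound := mul_add_sum_le_of_exp_le_hasProd (fun i => (ht i).le) hP hle s hx
  linarith [mul_nonneg hα hx.le]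

end Growth

section PowerSums

lemma summable_pow_succ_of_nonneg (ht : ∀ i, 0 ≤ t i) (hts : Summable t) (n : ℕ) :
    Summable fun i => t i ^ (n + 1) := by
  refine (hts.mul_left ((∑' i, t i) ^ n)).of_nonneg_of_le (fun i => pow_nonneg (ht i) _)
    fun i => ?_
  rw [pow_succ]
  gcongr
  · exact ht i
  · exact ht i
  · exact hts.le_tsum i fun j _ => ht j

lemma sq_tsum_le_tsum_mul_tsum_of_sq_le_mul {r f g : ι → ℝ} (hf : ∀ i, 0 ≤ f i)
    (hg : ∀ i, 0 ≤ g i) (hrfg : ∀ i, r i ^ 2 ≤ f i * g i) (hrs : Summable r) (hfs : Summable f)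
    (hgs : Summable g) : (∑' i, r i) ^ 2 ≤ (∑' i, f i) * ∑' i, g i :=
  le_of_tendsto_of_tendsto' (hrs.hasSum.pow 2) (Tendsto.mul hfs.hasSum hgs.hasSum) fun s =>
    s.sum_sq_le_sum_mul_sum_of_sq_le_mul (fun i _ => hf i) (fun i _ => hg i) fun i _ => hrfg i

lemma exists_le_of_mul_tsum_le_tsum_sq [Nonempty ι] {m : ℝ} (ht : ∀ i, 0 < t i)
    (hts : Summable t) (hm : m * ∑' i, t i ≤ ∑' i, t i ^ 2) : ∃ i, m ≤ t i := by
  by_contra! hlt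
  have hsq : ∀ i, t i ^ 2 < m * t i := fun i => by
    rw [sq]
    exact mul_lt_mul_of_pos_right (hlt i) (ht i)
  have hts2 := summable_pow_succ_of_nonneg (fun i => (ht i).le) hts 1
  have := hts2.tsum_lt_tsum (fun i => (hsq i).le) (hsq (Classical.arbitrary ι)) (hts.mul_left m)
  rw [tsum_mul_left] at this
  exact this.not_ge hm

end PowerSums

section NewtonInequalities

variable {a₀ a₁ a₂ a₃ p₁ p₂ p₃ : ℝ}

lemma mul_sub_sq_le_of_newton_of_sq_le_mul (ha₀ : 0 ≤ a₀) (hp : p₂ ^ 2 ≤ p₁ * p₃)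
    (h₁ : a₁ = a₀ * p₁) (h₂ : 2 * a₂ = a₁ * p₁ - a₀ * p₂)
    (h₃ : 3 * a₃ = a₂ * p₁ - a₁ * p₂ + a₀ * p₃) :
    a₂ * (4 * a₀ * a₂ - a₁ ^ 2) ≤ 3 * a₀ * a₁ * a₃ := by
  have h₂' : a₂ = a₀ * ((p₁ ^ 2 - p₂) / 2) := by rw [h₁] at h₂; linarith
  have h₃' : 3 * a₃ = a₀ * ((p₁ ^ 2 - p₂) / 2 * p₁ - p₁ * p₂ + p₃) := by
    rw [h₃, h₂', h₁]; ring
  have hmul : a₀ ^ 3 * p₂ ^ 2 ≤ a₀ ^ 3 * (p₁ * p₃) := by gcongr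
  calc a₂ * (4 * a₀ * a₂ - a₁ ^ 2)
      = a₀ ^ 2 * p₁ * (3 * a₃) - (a₀ ^ 3 * (p₁ * p₃) - a₀ ^ 3 * p₂ ^ 2) := by
        rw [h₃', h₂', h₁]; ring
    _ ≤ a₀ ^ 2 * p₁ * (3 * a₃) := by linarith
    _ = 3 * a₀ * a₁ * a₃ := by rw [h₁]; ring

lemma three_mul_mul_le_sq (ha₀ : 0 < a₀) (ha₂ : 0 < a₂) (h₂ : 2 * (a₀ * a₂) ≤ a₁ ^ 2)
    (h₃ : a₂ * (4 * a₀ * a₂ - a₁ ^ 2) ≤ 3 * a₀ * a₁ * a₃) (hq : a₁ ^ 3 * a₃ ≤ a₀ * a₂ ^ 3) :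
    3 * (a₀ * a₂) ≤ a₁ ^ 2 := by
  have hquad : a₂ * (a₁ ^ 2 * (4 * a₀ * a₂ - a₁ ^ 2)) ≤ a₂ * (3 * (a₀ * a₂) ^ 2) :=
    calc a₂ * (a₁ ^ 2 * (4 * a₀ * a₂ - a₁ ^ 2))
        = a₁ ^ 2 * (a₂ * (4 * a₀ * a₂ - a₁ ^ 2)) := by ring
      _ ≤ a₁ ^ 2 * (3 * a₀ * a₁ * a₃) := by gcongr
      _ = 3 * a₀ * (a₁ ^ 3 * a₃) := by ring
      _ ≤ 3 * a₀ * (a₀ * a₂ ^ 3) := by gcongr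
      _ = a₂ * (3 * (a₀ * a₂) ^ 2) := by ring
  have hfactor : 0 ≤ (a₁ ^ 2 - a₀ * a₂) * (a₁ ^ 2 - 3 * (a₀ * a₂)) := by
    linarith [le_of_mul_le_mul_left hquad ha₂]
  have hpos : 0 < a₁ ^ 2 - a₀ * a₂ := by linarith [mul_pos ha₀ ha₂]
  linarith [nonneg_of_mul_nonneg_right hfactor hpos]

lemma div_mul_le_of_newton (ha₀ : 0 < a₀) (ha₁ : 0 < a₁) (ha₂ : 0 < a₂) (hp₂ : 0 ≤ p₂)
    (hp : p₂ ^ 2 ≤ p₁ * p₃) (h₁ : a₁ = a₀ * p₁) (h₂ : 2 * a₂ = a₁ * p₁ - a₀ * p₂)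
    (h₃ : 3 * a₃ = a₂ * p₁ - a₁ * p₂ + a₀ * p₃) (hq : a₁ ^ 3 * a₃ ≤ a₀ * a₂ ^ 3) :
    a₂ / a₁ * p₁ ≤ p₂ := by
  have hsq : a₁ ^ 2 - 2 * (a₀ * a₂) = a₀ ^ 2 * p₂ := by
    rw [mul_left_comm 2, h₂, sq, sq]
    nth_rw 2 [h₁]
    ring
  have hthree : 3 * (a₀ * a₂) ≤ a₁ ^ 2 :=
    three_mul_mul_le_sq ha₀ ha₂ (by linarith [mul_nonneg (sq_nonneg a₀) hp₂])
      (mul_sub_sq_le_of_newton_of_sq_le_mul ha₀.le hp h₁ h₂ h₃) hq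
  refine le_of_mul_le_mul_left ?_ (pow_pos ha₀ 2)
  calc a₀ ^ 2 * (a₂ / a₁ * p₁) = a₀ * a₂ * ((a₀ * p₁) / a₁) := by ring
    _ = a₀ * a₂ := by rw [← h₁, div_self ha₁.ne', mul_one]
    _ ≤ a₀ ^ 2 * p₂ := by linarith

end NewtonInequalities

theorem exists_div_le_of_hasProd {a : ℕ → ℝ} {F : ℝ → ℝ} {β : ℝ}
    (ha₀ : 0 < a 0) (ha₁ : 0 < a 1) (ha₂ : 0 < a 2) (hq : a 1 ^ 3 * a 3 ≤ a 0 * a 2 ^ 3)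
    (ht : ∀ i, 0 < t i) (hts : Summable t) (htβ : ∑' i, t i ≤ β)
    (hF : ∀ᶠ x in 𝓝 0, HasSum (fun k => a k * x ^ k) (F x))
    (hprod : ∀ᶠ x in 𝓝 0, HasProd (fun i => (1 + x * t i) * Real.exp (-(x * t i)))
      (F x / a 0 * Real.exp (-(β * x)))) : ∃ i, a 2 / a 1 ≤ t i := by
  have hnonneg : ∀ i, 0 ≤ t i := fun i => (ht i).le
  have hsq := summable_pow_succ_of_nonneg hnonneg hts 1
  have hcube := summable_pow_succ_of_nonneg hnonneg hts 2
  have hp₃ : 0 ≤ ∑' i, t i ^ 3 := tsum_nonneg fun i => pow_nonneg (hnonneg i) 3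
  have hcs : (∑' i, t i ^ 2) ^ 2 ≤ β * ∑' i, t i ^ 3 :=
    (sq_tsum_le_tsum_mul_tsum_of_sq_le_mul hnonneg (fun i => pow_nonneg (hnonneg i) 3)
      (fun i => le_of_eq (by ring)) hsq hts hcube).trans (by gcongr)
  obtain ⟨h₁, h₂, h₃⟩ := newton_identities ha₀.ne' hsq hF hprod
  have hdiv : a 2 / a 1 * β ≤ ∑' i, t i ^ 2 :=
    div_mul_le_of_newton ha₀ ha₁ ha₂ (tsum_nonneg fun i => sq_nonneg (t i)) hcs h₁ h₂ h₃ hq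
  have hβ : 0 < β := pos_of_mul_pos_right (h₁ ▸ ha₁) ha₀.le
  have : Nonempty ι := by
    by_contra! hempty
    rw [tsum_empty] at hdiv
    exact hdiv.not_gt (by positivity)
  exact exists_le_of_mul_tsum_le_tsum_sq ht hts
    ((mul_le_mul_of_nonneg_left htβ (by positivity)).trans hdiv)

end Product

lemma secondQuotient_le_secondQuotient_succ_iff {a : ℕ → ℝ} (ha : ∀ k, 0 < a k) (n : ℕ) :
    secondQuotient a (n + 2) ≤ secondQuotient a (n + 3) ↔
      a (n + 1) ^ 3 * a (n + 3) ≤ a n * a (n + 2) ^ 3 := by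
  have h₀ := ha n
  have h₁ := ha (n + 1)
  have h₂ := ha (n + 2)
  have h₃ := ha (n + 3)
  change a (n + 1) ^ 2 / (a n * a (n + 2)) ≤ a (n + 2) ^ 2 / (a (n + 1) * a (n + 3)) ↔ _
  rw [div_le_div_iff₀ (by positivity) (by positivity)]
  ring_nf

lemma coeff_zero_le_of_hasSum {a : ℕ → ℝ} {x y : ℝ} (ha : ∀ k, 0 ≤ a k) (hx : 0 ≤ x)
    (h : HasSum (fun k => a k * x ^ k) y) : a 0 ≤ y := by
  simpa using le_hasSum h 0 fun k _ => mul_nonneg (ha k) (pow_nonneg hx k)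

/-- The Laguerre–Pólya class, for entire functions on `ℂ` that are real on the real axis. The
convergence of the canonical product is required as unconditional multipliability at each point,
and a finite or empty index type `ι` accounts for functions with finitely many zeros. -/
def IsLaguerrePolya (f : ℂ → ℂ) : Prop :=
  ∃ (c α β : ℝ) (n : ℕ) (ι : Type) (_ : Countable ι) (x : ι → ℝ),
    0 ≤ α ∧ (∀ i, x i ≠ 0) ∧ Summable (fun i => ((x i) ^ 2)⁻¹) ∧
    (∀ z : ℂ, Multipliable (fun i => (1 - z / (x i : ℂ)) * Complex.exp (z / (x i : ℂ)))) ∧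
    (∀ z : ℂ, f z = (c : ℂ) * z ^ n * Complex.exp (-(α : ℂ) * z ^ 2 + (β : ℂ) * z) *
      ∏' i, ((1 - z / (x i : ℂ)) * Complex.exp (z / (x i : ℂ))))

lemma hasProd_of_hasProd_ofReal {ι : Type*} {g : ι → ℝ} {p : ℝ}
    (h : HasProd (fun i => (g i : ℂ)) (p : ℂ)) : HasProd g p :=
  (Complex.isometry_ofReal.isEmbedding.isInducing.hasProd_iff (g := Complex.ofRealHom) g p).1 h

lemma IsLaguerrePolya.exists_hasProd {f : ℂ → ℂ} {F : ℝ → ℝ} (hf : IsLaguerrePolya f)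
    (hF : ∀ x : ℝ, f x = F x) (hF0 : F 0 ≠ 0) :
    ∃ (α β : ℝ) (ι : Type) (t : ι → ℝ), 0 ≤ α ∧ (∀ i, t i ≠ 0) ∧ (∀ i, F (-(t i)⁻¹) = 0) ∧
      ∀ x, HasProd (fun i => (1 + x * t i) * Real.exp (-(x * t i)))
        (F x / F 0 * Real.exp (α * x ^ 2 - β * x)) := by
  obtain ⟨c, α, β, n, ι, _, r, hα, hr, _, hmul, hprod⟩ := hf
  have hf0 : f 0 ≠ 0 := by exact_mod_cast hF 0 ▸ Complex.ofReal_ne_zero.2 hF0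
  have hn : n = 0 := by
    by_contra hn
    exact hf0 (by rw [hprod, zero_pow hn, mul_zero, zero_mul, zero_mul])
  have hc : f 0 = c := by simp [hprod, hn]
  have hc' : F 0 = c := by exact_mod_cast (hF 0).symm.trans hc
  refine ⟨α, β, ι, fun i => -(r i)⁻¹, hα, fun i => neg_ne_zero.2 (inv_ne_zero (hr i)),
    fun i => ?_, fun x => hasProd_of_hasProd_ofReal ?_⟩
  · have hzero : f (r i : ℂ) = 0 := by
      rw [hprod, tprod_of_exists_eq_zero ⟨i, by simp [hr i]⟩, mul_zero]
    rw [inv_neg, neg_neg, inv_inv]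
    exact_mod_cast (hF _).symm.trans hzero
  · convert! (hmul x).hasProd using 1
    · funext i
      push_cast
      rw [mul_neg, neg_neg, ← sub_eq_add_neg, div_eq_mul_inv]
    · have hc0 : (c : ℂ) ≠ 0 := hc ▸ hf0
      have hexp : Complex.exp (-α * x ^ 2 + β * x) * Complex.exp (α * x ^ 2 - β * x) = 1 := by
        rw [← Complex.exp_add]
        ring_nf
        exact Complex.exp_zero
      push_cast
      rw [← hF, hc', hprod, hn, pow_zero, mul_one, mul_assoc,
        mul_div_cancel_left₀ _ hc0, mul_right_comm, hexp, one_mul]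

theorem stmt5_general (a : ℕ → ℝ) (f : ℂ → ℂ) (ha₀ : 0 < a 0) (ha₁ : 0 < a 1) (ha₂ : 0 < a 2)
    (ha : ∀ k, 0 ≤ a k) (hf : ∀ z : ℂ, HasSum (fun k : ℕ => (a k : ℂ) * z ^ k) (f z))
    (hq : a 1 ^ 3 * a 3 ≤ a 0 * a 2 ^ 3) (hLP : IsLaguerrePolya f) :
    ∃ x : ℝ, x ∈ Set.Ico (-(a 1 / a 2)) 0 ∧ f x = 0 := by
  have hsum (x : ℝ) : HasSum (fun k => a k * x ^ k) (f x).re := by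
    exact_mod_cast Complex.hasSum_re (hf x)
  have hF (x : ℝ) : f x = ((f x).re : ℝ) := by
    refine (hf x).unique ?_
    exact_mod_cast Complex.hasSum_ofReal.2 (hsum x)
  have hF0 : (f (0 : ℝ)).re = a 0 := by
    simpa using iteratedDeriv_zero_of_hasSum (.of_forall hsum) 0
  have hmono {x : ℝ} (hx : 0 ≤ x) : (f (0 : ℝ)).re ≤ (f x).re :=
    hF0.trans_le (coeff_zero_le_of_hasSum ha hx (hsum x))
  have hF0pos : 0 < (f (0 : ℝ)).re := hF0 ▸ ha₀
  obtain ⟨α, β, ι, t, hα, ht_ne, hzero, hprod⟩ := hLP.exists_hasProd hF hF0pos.ne'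
  have ht : ∀ i, 0 < t i := fun i => (ht_ne i).lt_or_gt.resolve_left fun hneg =>
    (hF0pos.trans_le (hmono (neg_nonneg.2 (inv_nonpos.2 hneg.le)))).ne' (hzero i)
  have hle : ∀ x > 0, Real.exp (α * x ^ 2 - β * x) ≤
      (f x).re / (f (0 : ℝ)).re * Real.exp (α * x ^ 2 - β * x) := fun x hx =>
    le_mul_of_one_le_left (Real.exp_pos _).le ((one_le_div hF0pos).2 (hmono hx.le))
  have htβ := sum_le_of_exp_le_hasProd hα ht (fun x _ => hprod x) hle
  obtain rfl : α = 0 := eq_zero_of_exp_le_hasProd hα (fun i => (ht i).le) (fun x _ => hprod x) hle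
  obtain ⟨i, hi⟩ := exists_div_le_of_hasProd ha₀ ha₁ ha₂ hq ht
    (summable_of_sum_le (fun i => (ht i).le) htβ) (Real.tsum_le_of_sum_le (fun i => (ht i).le) htβ)
    (.of_forall hsum) (.of_forall fun x => by
      rw [← hF0]
      simpa using hprod x)
  refine ⟨-(t i)⁻¹, ⟨neg_le_neg ?_, neg_neg_of_pos (inv_pos.2 (ht i))⟩, ?_⟩
  · rw [← inv_div]
    exact inv_anti₀ (div_pos ha₂ ha₁) hi
  · rw [hF, hzero, Complex.ofReal_zero]

theorem stmt5 (a : ℕ → ℝ) (f : ℂ → ℂ)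
    (ha : ∀ k, 0 < a k)
    (hf : ∀ z : ℂ, HasSum (fun k : ℕ => (a k : ℂ) * z ^ k) (f z))
    (hq23 : secondQuotient a 2 ≤ secondQuotient a 3)
    (hLP : ∃ (c α β : ℝ) (n : ℕ) (ι : Type) (_ : Countable ι) (x : ι → ℝ),
      0 ≤ α ∧ (∀ i, x i ≠ 0) ∧ Summable (fun i => ((x i) ^ 2)⁻¹) ∧
      (∀ z : ℂ, Multipliable (fun i => (1 - z / (x i : ℂ)) * Complex.exp (z / (x i : ℂ)))) ∧
      (∀ z : ℂ, f z = (c : ℂ) * z ^ n * Complex.exp (-(α : ℂ) * z ^ 2 + (β : ℂ) * z) *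
        ∏' i, ((1 - z / (x i : ℂ)) * Complex.exp (z / (x i : ℂ))))) :
    ∃ x : ℝ, x ∈ Set.Icc (-(a 1 / a 2)) 0 ∧ (f (x : ℂ)).re ≤ 0 := by
  obtain ⟨x, hx, hfx⟩ := stmt5_general a f (ha 0) (ha 1) (ha 2) (fun k => (ha k).le) hf
    ((secondQuotient_le_secondQuotient_succ_iff ha 0).1 hq23) hLP
  exact ⟨x, Set.Ico_subset_Icc_self hx, by rw [hfx, Complex.zero_re]⟩
end
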